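/- arXiv:2212.06957 — 2 statements merged into one kernel-verified Lean document; each statement's English description precedes it below -/
import Mathlib

section
/- For all fixed integers p ≥ 3 and q with 1 ≤ q ≤ (p² − 26p + 55)/4, there exist a constant K > 0 and an integer n₀ ≥ 2 such that for all n ≥ n₀ one has f(n,p,q) ≤ K · n^{(p−2)/(C(p,2)−q+1)} · (log n)^{−1/(C(p,2)−q+1)}, where C(p,2) = p(p−1)/2. -/
namespace EG

/-- The set of (non-diagonal) edges inside a vertex set `S`. -/
def edgesOf {V : Type} [DecidableEq V] (S : Finset V) : Finset (Sym2 V) :=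
  S.sym2.filter fun e => ¬ e.IsDiag

/-- `c` is a `(p,q)`-coloring of `K_n` (with `k` colors): every set of `p` vertices
spans edges of at least `q` distinct colors. -/
def IsPQColoring (n p q k : ℕ) (c : Sym2 (Fin n) → Fin k) : Prop :=
  ∀ S : Finset (Fin n), S.card = p → q ≤ ((edgesOf S).image c).card

/-- The generalized Ramsey number `f(n,p,q)`: the minimum number of colors in a
`(p,q)`-coloring of `K_n`. -/
noncomputable def genRamsey (n p q : ℕ) : ℕ :=
  sInf { k | ∃ c : Sym2 (Fin n) → Fin k, IsPQColoring n p q k c }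

/-- `F²(n;k,s)`: the smallest number `m` of edges such that every simple graph on `n`
vertices with `m` edges contains `k` vertices inducing at least `s` edges. -/
noncomputable def F2 (n k s : ℕ) : ℕ :=
  sInf { m | ∀ E : Finset (Sym2 (Fin n)), (∀ e ∈ E, ¬ e.IsDiag) → E.card = m →
    ∃ S : Finset (Fin n), S.card = k ∧ s ≤ (E ∩ S.sym2).card }

/-- The coloring `c` has a monochromatic clique on the vertex set `S`. -/
def IsMonoClique {n k : ℕ} (c : Sym2 (Fin n) → Fin k) (S : Finset (Fin n)) : Prop :=
  ∃ col : Fin k, ∀ e ∈ edgesOf S, c e = col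

/-- The `k`-color diagonal Ramsey number `R_k(p)`: the least `n` such that every
`k`-coloring of the edges of `K_n` contains a monochromatic `p`-clique. -/
noncomputable def multiRamsey (k p : ℕ) : ℕ :=
  sInf { n | ∀ c : Sym2 (Fin n) → Fin k, ∃ S : Finset (Fin n), S.card = p ∧ IsMonoClique c S }

end EG

namespace EG
open Finset

/-- weighted averaging -/
lemma avg_exists {α : Type*} [Fintype α] (P F : α → ℝ) (hP : ∀ a, 0 ≤ P a) (h1 : ∑ a, P a = 1)
    (M : ℝ) (h : ∑ a, P a * F a ≤ M) : ∃ a, 0 < P a ∧ F a ≤ M := by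
  by_contra hcon
  push Not at hcon
  have h2 : ∑ a, P a * M < ∑ a, P a * F a := by
    apply Finset.sum_lt_sum
    · intro a _
      rcases (hP a).eq_or_lt with h0 | h0
      · simp [← h0]
      · exact mul_le_mul_of_nonneg_left (hcon a h0).le (hP a)
    · by_contra hno
      push Not at hno
      have : ∀ a, P a = 0 := by
        intro a
        by_contra hne
        have h0 : 0 < P a := lt_of_le_of_ne (hP a) (Ne.symm hne)
        have := hno a (mem_univ a)
        have := mul_lt_mul_of_pos_left (hcon a h0) h0
        linarith
      simp [this] at h1
  rw [← Finset.sum_mul, h1] at h2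
  linarith

lemma one_add_sum_le_prod {α : Type*} (s : Finset α) (f : α → ℝ) (hf : ∀ a ∈ s, 0 ≤ f a) :
    1 + ∑ a ∈ s, f a ≤ ∏ a ∈ s, (1 + f a) := by
  classical
  induction s using Finset.induction_on with
  | empty => simp
  | insert a s ha ih =>
    rw [sum_insert ha, prod_insert ha]
    have h1 := ih (fun b hb => hf b (mem_insert_of_mem hb))
    have h2 := hf a (mem_insert_self _ _)
    have h3 : 0 ≤ ∑ b ∈ s, f b := sum_nonneg (fun b hb => hf b (mem_insert_of_mem hb))
    nlinarith

/-- Negative correlation inequality. -/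
lemma neg_corr {α : Type*} [Fintype α] [DecidableEq α] (P : α → ℝ) (hP : ∀ a, 0 ≤ P a)
    (h1 : ∑ a, P a = 1) (R : α → α → Prop) [∀ a b, Decidable (R a b)]
    (hR : ∀ c c' g, R c g → R c' g → c = c')
    (G : α → ℝ) (hG0 : ∀ c, 0 < G c) (hG1 : ∀ c, G c ≤ 1) :
    ∑ g, P g * ∏ c, (if R c g then 1 else G c) ≤
      ∏ c, (G c + (∑ g, if R c g then P g else 0) * (1 - G c)) := by
  have key : ∀ g, ∏ c, (if R c g then 1 else G c) =
      (∏ c, G c) * (1 + ∑ c, if R c g then (1 / G c - 1) else 0) := by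
    intro g
    by_cases h : ∃ c0, R c0 g
    · obtain ⟨c0, hc0⟩ := h
      have e1 : ∀ c, R c g ↔ c = c0 := fun c =>
        ⟨fun h => hR _ _ _ h hc0, fun h => h ▸ hc0⟩
      simp only [e1]
      rw [Finset.sum_ite_eq' univ c0]
      rw [← Finset.mul_prod_erase univ _ (mem_univ c0), ← Finset.mul_prod_erase univ G (mem_univ c0)]
      have : ∏ x ∈ univ.erase c0, (if x = c0 then (1:ℝ) else G x) = ∏ x ∈ univ.erase c0, G x := by
        apply Finset.prod_congr rfl
        intro x hx
        simp [Finset.ne_of_mem_erase hx]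
      rw [this]
      have := (hG0 c0).ne'
      simp
      field_simp
    · push Not at h
      simp [h]
  simp only [key]
  have e2 : ∑ g, P g * ((∏ c, G c) * (1 + ∑ c, if R c g then (1 / G c - 1) else 0)) =
      (∏ c, G c) * (1 + ∑ c, (∑ g, if R c g then P g else 0) * (1 / G c - 1)) := by
    have : ∑ c, (∑ g, if R c g then P g else 0) * (1 / G c - 1)
        = ∑ g, P g * ∑ c, (if R c g then (1 / G c - 1) else 0) := by
      simp only [Finset.sum_mul, Finset.mul_sum]
      rw [Finset.sum_comm]
      refine sum_congr rfl fun g _ => sum_congr rfl fun c _ => ?_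
      split_ifs <;> simp
    rw [this, mul_add, mul_one, Finset.mul_sum]
    simp only [mul_add, mul_one, Finset.sum_add_distrib]
    rw [← Finset.sum_mul, h1, one_mul]
    congr 1
    exact sum_congr rfl fun g _ => by ring
  rw [e2]
  have e3 : ∏ c, (G c + (∑ g, if R c g then P g else 0) * (1 - G c)) =
      (∏ c, G c) * ∏ c, (1 + (∑ g, if R c g then P g else 0) * (1 / G c - 1)) := by
    rw [← Finset.prod_mul_distrib]
    refine prod_congr rfl fun c _ => ?_
    have := (hG0 c).ne'
    field_simp
  rw [e3]
  apply mul_le_mul_of_nonneg_left _ (prod_nonneg fun c _ => (hG0 c).le)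
  apply one_add_sum_le_prod
  intro c _
  apply mul_nonneg
  · exact sum_nonneg fun g _ => by split_ifs; exacts [hP g, le_rfl]
  · have : 1 ≤ 1 / G c := by rw [le_div_iff₀ (hG0 c)]; simpa using hG1 c
    linarith

/-- The inequality used when a conflict freezes. -/
lemma freeze_ineq (σ : ℕ) (β : ℝ) (h0 : 0 ≤ β) (h2 : β ≤ 1 / 2) (h1 : σ * β ≤ 1 / 4) :
    ((1 - β)⁻¹) ^ σ ≤ 1 + 4 * σ * β := by
  have a1 : (1 - β)⁻¹ ≤ Real.exp (2 * β) := by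
    rw [inv_le_comm₀ (by linarith) (Real.exp_pos _), ← Real.exp_neg]
    have : Real.exp (-(2 * β)) ≤ 1 - 2 * β + (2*β)^2/2 := by
      have := Real.add_one_le_exp (2*β)
      have h3 := Real.quadratic_le_exp_of_nonneg (x := 2*β) (by linarith)
      rw [Real.exp_neg, inv_le_comm₀ (Real.exp_pos _) (by nlinarith)]
      refine le_trans ?_ h3
      rw [inv_le_iff_one_le_mul₀ (by nlinarith)]
      nlinarith [pow_nonneg h0 4]
    nlinarith
  have a2 : ((1 - β)⁻¹) ^ σ ≤ Real.exp (2 * β) ^ σ :=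
    pow_le_pow_left₀ (inv_nonneg.2 (by linarith)) a1 σ
  rw [← Real.exp_nat_mul] at a2
  refine a2.trans ?_
  have h3 : 0 ≤ (σ:ℝ) * β := by positivity
  have : |(σ:ℝ) * (2 * β)| ≤ 1 := by rw [abs_of_nonneg (by positivity)]; linarith
  have := Real.abs_exp_sub_one_le this
  rw [abs_of_nonneg (by positivity : (0:ℝ) ≤ σ * (2*β))] at this
  have := le_abs_self (Real.exp (σ * (2*β)) - 1)
  linarith

lemma exp_le_one_sub (y : ℝ) (h0 : 0 ≤ y) (h2 : y ≤ 1 / 2) : Real.exp (-(2 * y)) ≤ 1 - y := by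
  have h := freeze_ineq 0 0 (by norm_num) (by norm_num) (by norm_num)
  have h3 := Real.quadratic_le_exp_of_nonneg (x := 2*y) (by linarith)
  rw [Real.exp_neg, inv_le_comm₀ (Real.exp_pos _) (by linarith)]
  refine le_trans ?_ h3
  rw [inv_le_iff_one_le_mul₀ (by linarith)]
  nlinarith [pow_nonneg h0 3]

end EG

namespace EG
open Finset

/-- A locally sparse system of conflicts: conflict `i` lives on the vertex set `e i`, and
`F i` is the list of the forbidden colorings of `e i`. -/
structure Sys (V I : Type) [DecidableEq V] (B : ℕ) where
  e : I → Finset V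
  F : I → Finset (V → Fin B)
  two : ∀ i, 2 ≤ (e i).card
  lin : ∀ i j u v, u ≠ v → u ∈ e i → v ∈ e i → u ∈ e j → v ∈ e j → i = j
  tri : ∀ i j l x y z, i ≠ j → j ≠ l → i ≠ l → x ≠ y → y ≠ z → x ≠ z →
    x ∈ e i → x ∈ e j → y ∈ e j → y ∈ e l → z ∈ e l → z ∈ e i → False
  quad : ∀ i j l m x y z w, i ≠ j → i ≠ l → i ≠ m → j ≠ l → j ≠ m → l ≠ m →
    x ≠ y → x ≠ z → x ≠ w → y ≠ z → y ≠ w → z ≠ w →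
    x ∈ e i → x ∈ e j → y ∈ e j → y ∈ e l → z ∈ e l → z ∈ e m → w ∈ e m → w ∈ e i → False
  rig : ∀ i, ∀ f ∈ F i, ∀ f' ∈ F i, ∀ v ∈ e i, (∀ z ∈ e i, z ≠ v → f z = f' z) → f = f'

set_option linter.unusedSectionVars false

lemma prod_le_prod_of_subset_of_one_le₀ {α : Type*} {s t : Finset α} {f : α → ℝ}
    (h : s ⊆ t) (h0 : ∀ i ∈ s, 0 ≤ f i) (h1 : ∀ i ∈ t, i ∉ s → 1 ≤ f i) :
    ∏ i ∈ s, f i ≤ ∏ i ∈ t, f i := by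
  classical
  rw [← Finset.prod_sdiff h]
  have : 1 ≤ ∏ i ∈ t \ s, f i := by
    rw [← Finset.prod_const_one (s := t \ s)]
    apply Finset.prod_le_prod (fun _ _ => zero_le_one)
    intro i hi
    rw [mem_sdiff] at hi
    exact h1 i hi.1 hi.2
  exact le_mul_of_one_le_left (prod_nonneg h0) this

section
variable {V I : Type} [Fintype V] [DecidableEq V] [Fintype I] [DecidableEq I] {B : ℕ}

/-- Conditional weight of conflict `i` seen from `v` with color `c`. -/
noncomputable def wt (S : Sys V I B) (y : V → Fin B → ℝ) (i : I) (v : V) (c : Fin B) : ℝ :=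
  ∑ f ∈ (S.F i).filter (fun f => f v = c), ∏ z ∈ (S.e i).erase v, y z (f z)

/-- conflicts at `v` having another uncolored vertex -/
def unfr (S : Sys V I B) (D : Finset V) (v : V) : Finset I :=
  univ.filter (fun i => v ∈ S.e i ∧ ¬ (S.e i).erase v ⊆ D)

noncomputable def Psi (S : Sys V I B) (σ : ℕ) (s : ℝ) (D : Finset V) (y Q : V → Fin B → ℝ)
    (v : V) (c : Fin B) : ℝ :=
  Q v c ^ σ * ∏ i ∈ unfr S D v, (1 + s * wt S y i v c)

noncomputable def Xi (σ : ℕ) (y : V → Fin B → ℝ) (v : V) : ℝ :=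
  ∏ c, (1 - σ * y v c)

/-- giving `u` the color `γ` forbids color `c` at `v` -/
def Bk (S : Sys V I B) (D : Finset V) (b : V → Fin B) (u v : V) (c γ : Fin B) : Prop :=
  v ∉ D ∧ v ≠ u ∧ ∃ i, u ∈ S.e i ∧ v ∈ S.e i ∧ (∀ z ∈ S.e i, z ≠ u → z ≠ v → z ∈ D) ∧
    ∃ f ∈ S.F i, f v = c ∧ f u = γ ∧ ∀ z ∈ S.e i, z ≠ u → z ≠ v → b z = f z

def Aff (S : Sys V I B) (D : Finset V) (u z : V) : Prop :=
  z = u ∨ (z ∉ D ∧ z ≠ u ∧ ∃ i, u ∈ S.e i ∧ z ∈ S.e i ∧ ∀ x ∈ S.e i, x ≠ u → x ≠ z → x ∈ D)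

open Classical in
noncomputable def bet (S : Sys V I B) (D : Finset V) (b : V → Fin B) (u : V) (P : Fin B → ℝ)
    (v : V) (c : Fin B) : ℝ :=
  ∑ γ, if Bk S D b u v c γ then P γ else 0

open Classical in
noncomputable def ynew (S : Sys V I B) (D : Finset V) (b : V → Fin B) (u : V) (P : Fin B → ℝ)
    (X : ℝ) (y : V → Fin B → ℝ) (γ : Fin B) (v : V) (c : Fin B) : ℝ :=
  if v = u then (if c = γ then X else 0)
  else if Bk S D b u v c γ then 0 else y v c * (1 - bet S D b u P v c)⁻¹

lemma Bk.aff {S : Sys V I B} {D : Finset V} {b : V → Fin B} {u v : V} {c γ : Fin B}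
    (h : Bk S D b u v c γ) : Aff S D u v := by
  obtain ⟨h1, h2, i, h3, h4, h5, _⟩ := h
  exact Or.inr ⟨h1, h2, i, h3, h4, h5⟩

lemma Bk.uniq {S : Sys V I B} {D : Finset V} {b : V → Fin B} {u v : V} {c c' γ γ' : Fin B}
    (h : Bk S D b u v c γ) (h' : Bk S D b u v c' γ') (hor : c = c' ∨ γ = γ') :
    c = c' ∧ γ = γ' := by
  obtain ⟨h1, h2, i, h3, h4, h5, f, hf, hfv, hfu, hfz⟩ := h
  obtain ⟨-, -, j, k3, k4, k5, g, hg, hgv, hgu, hgz⟩ := h'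
  obtain rfl := S.lin i j v u h2 h4 h3 k4 k3
  have : f = g := by
    rcases hor with rfl | rfl
    · apply S.rig i f hf g hg u h3
      intro z hz hzu
      by_cases hzv : z = v
      · subst hzv; rw [hfv, hgv]
      · rw [← hfz z hz hzu hzv, hgz z hz hzu hzv]
    · apply S.rig i f hf g hg v h4
      intro z hz hzv
      by_cases hzu : z = u
      · subst hzu; rw [hfu, hgu]
      · rw [← hfz z hz hzu hzv, hgz z hz hzu hzv]
  subst this
  exact ⟨hfv.symm.trans hgv, hfu.symm.trans hgu⟩

lemma claimC (S : Sys V I B) {D : Finset V} {u v z z' : V} {i j : I}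
    (hvD : v ∉ D) (hvu : v ≠ u)
    (hvi : v ∈ S.e i) (hzi : z ∈ S.e i) (hzv : z ≠ v) (hz : Aff S D u z)
    (hvj : v ∈ S.e j) (hzj : z' ∈ S.e j) (hzv' : z' ≠ v) (hz' : Aff S D u z') :
    i = j ∧ z = z' := by
  have main : ∀ (i j : I) (z' : V), v ∈ S.e i → u ∈ S.e i → v ∈ S.e j → z' ∈ S.e j → z' ≠ v →
      (z' ∉ D ∧ z' ≠ u ∧ ∃ i, u ∈ S.e i ∧ z' ∈ S.e i ∧ ∀ x ∈ S.e i, x ≠ u → x ≠ z' → x ∈ D) →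
      False := by
    rintro i j z' hvi hui hvj hzj hzv' ⟨h1, h2, f, hf1, hf2, hf3⟩
    have hvf : v ∉ S.e f := fun h => hvD (hf3 v h hvu hzv'.symm)
    have hfi : f ≠ i := fun h => hvf (h ▸ hvi)
    have hfj : f ≠ j := fun h => hvf (h ▸ hvj)
    by_cases hij : i = j
    · subst hij
      exact hfi (S.lin f i u z' h2.symm hf1 hf2 hui hzj)
    · exact S.tri i j f v z' u hij hfj.symm hfi.symm hzv'.symm h2 hvu hvi hvj hzj hf2 hf1 hui
  rcases hz with rfl | hz
  · rcases hz' with rfl | hz'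
    · exact ⟨S.lin i j v z' hvu hvi hzi hvj hzj, rfl⟩
    · exact (main i j z' hvi hzi hvj hzj hzv' hz').elim
  · rcases hz' with rfl | hz'
    · exact (main j i z hvj hzj hvi hzi hzv hz).elim
    · obtain ⟨h1, h2, f, hf1, hf2, hf3⟩ := hz
      obtain ⟨k1, k2, g, hg1, hg2, hg3⟩ := hz'
      have hvf : v ∉ S.e f := fun h => hvD (hf3 v h hvu hzv.symm)
      have hvg : v ∉ S.e g := fun h => hvD (hg3 v h hvu hzv'.symm)
      have hfi : f ≠ i := fun h => hvf (h ▸ hvi)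
      have hfj : f ≠ j := fun h => hvf (h ▸ hvj)
      have hgi : g ≠ i := fun h => hvg (h ▸ hvi)
      have hgj : g ≠ j := fun h => hvg (h ▸ hvj)
      by_cases hzz : z = z'
      · subst hzz
        exact ⟨S.lin i j v z hzv.symm hvi hzi hvj hzj, rfl⟩
      exfalso
      by_cases hij : i = j
      · subst hij
        by_cases hfg : f = g
        · subst hfg
          exact hfi (S.lin f i z z' hzz hf2 hg2 hzi hzj)
        · exact S.tri f i g z z' u hfi hgi.symm hfg hzz k2 h2 hf2 hzi hzj hg2 hg1 hf1
      · by_cases hfg : f = g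
        · subst hfg
          exact S.tri i j f v z' z hij hfj.symm hfi.symm hzv'.symm (Ne.symm hzz) hzv.symm
            hvi hvj hzj hg2 hf2 hzi
        · exact S.quad i j g f v z' u z hij hgi.symm hfi.symm hgj.symm hfj.symm (Ne.symm hfg)
            hzv'.symm hvu hzv.symm k2 (Ne.symm hzz) h2.symm hvi hvj hzj hg2 hg1 hf1 hf2 hzi

lemma bet_eq_zero {S : Sys V I B} {D : Finset V} {b : V → Fin B} {u : V} {P : Fin B → ℝ}
    {v : V} {c : Fin B} (h : ∀ γ, ¬ Bk S D b u v c γ) : bet S D b u P v c = 0 := by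
  unfold bet
  exact sum_eq_zero fun γ _ => by simp [h γ]

lemma bet_eq {S : Sys V I B} {D : Finset V} {b : V → Fin B} {u : V} {P : Fin B → ℝ}
    {v : V} {c γ : Fin B} (h : Bk S D b u v c γ) : bet S D b u P v c = P γ := by
  unfold bet
  rw [Finset.sum_eq_single γ]
  · simp [h]
  · intro γ' _ hne
    rw [if_neg]
    intro h'
    exact hne (h'.uniq h (Or.inl rfl)).2
  · simp

lemma ynew_of_not_aff {S : Sys V I B} {D : Finset V} {b : V → Fin B} {u : V} {P : Fin B → ℝ}
    {X : ℝ} {y : V → Fin B → ℝ} {γ : Fin B} {v : V} (h : ¬ Aff S D u v) (c : Fin B) :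
    ynew S D b u P X y γ v c = y v c := by
  have h1 : v ≠ u := fun h' => h (Or.inl h')
  have h2 : ∀ c γ, ¬ Bk S D b u v c γ := fun c γ h' => h h'.aff
  unfold ynew
  rw [if_neg h1, if_neg (h2 _ _), bet_eq_zero (h2 c)]
  simp

lemma avg_ynew {S : Sys V I B} {D : Finset V} {b : V → Fin B} {u : V} {P : Fin B → ℝ}
    {X : ℝ} {y : V → Fin B → ℝ} {v : V} {c : Fin B} (hP : ∑ γ, P γ = 1)
    (hPy : ∀ γ, P γ * X = y u γ) (hb : bet S D b u P v c < 1) :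
    ∑ γ, P γ * ynew S D b u P X y γ v c = y v c := by
  classical
  unfold ynew
  by_cases hv : v = u
  · subst hv
    simp [hPy]
  · simp only [if_neg hv]
    have : ∀ γ, P γ * (if Bk S D b u v c γ then 0 else y v c * (1 - bet S D b u P v c)⁻¹)
        = (P γ - if Bk S D b u v c γ then P γ else 0) * (y v c * (1 - bet S D b u P v c)⁻¹) := by
      intro γ
      split_ifs <;> ring
    simp only [this]
    rw [← Finset.sum_mul, Finset.sum_sub_distrib, hP]
    change (1 - bet S D b u P v c) * _ = _
    have : (1 - bet S D b u P v c) ≠ 0 := by linarith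
    field_simp

lemma wt_nonneg {S : Sys V I B} {y : V → Fin B → ℝ} (hy : ∀ v c, 0 ≤ y v c) (i v c) :
    0 ≤ wt S y i v c :=
  sum_nonneg fun _ _ => prod_nonneg fun _ _ => hy _ _

lemma psi_step (S : Sys V I B) (σ : ℕ) (s κ : ℝ) (hs : s = 4 * σ * κ) (hκ : 0 ≤ κ)
    {D : Finset V} {b : V → Fin B} {u : V}
    {P : Fin B → ℝ} (hP0 : ∀ γ, 0 ≤ P γ) (hP : ∑ γ, P γ = 1)
    {X : ℝ} {y Q : V → Fin B → ℝ} (hPy : ∀ γ, P γ * X = y u γ) (hX : 0 ≤ X)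
    (hy : ∀ v c, 0 ≤ y v c)
    (huD : u ∉ D) {v : V} (hvD : v ∉ D) (hvu : v ≠ u) (c : Fin B) (hQ : 0 ≤ Q v c)
    (hb2 : ∀ v c, bet S D b u P v c ≤ 1 / 2) (hb3 : σ * bet S D b u P v c ≤ 1 / 4)
    (hw : ∀ i, ∀ γ, ∀ f ∈ S.F i, u ∈ S.e i → v ∈ S.e i → f v = c → f u = γ →
      (∀ z ∈ S.e i, z ≠ u → z ≠ v → z ∈ D ∧ b z = f z) → P γ ≤ κ * wt S y i v c) :
    ∑ γ, P γ * Psi S σ s (insert u D) (ynew S D b u P X y γ)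
      (fun v c => Q v c * (1 - bet S D b u P v c)⁻¹) v c ≤ Psi S σ s D y Q v c := by
  have hs0 : 0 ≤ s := by rw [hs]; positivity
  have hbet0 : 0 ≤ bet S D b u P v c :=
    sum_nonneg fun γ _ => by split_ifs; exacts [hP0 γ, le_rfl]
  have hsub : unfr S (insert u D) v ⊆ unfr S D v := by
    intro i hi
    simp only [unfr, mem_filter, mem_univ, true_and] at hi ⊢
    exact ⟨hi.1, fun h => hi.2 (h.trans (subset_insert _ _))⟩
  have hterm : ∀ i, 1 ≤ 1 + s * wt S y i v c := fun i => by
    have := mul_nonneg hs0 (wt_nonneg hy (S := S) i v c)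
    linarith
  have hynn : ∀ γ v c, 0 ≤ ynew S D b u P X y γ v c := by
    intro γ v c
    unfold ynew
    split_ifs
    · exact hX
    · exact le_rfl
    · exact le_rfl
    · exact mul_nonneg (hy _ _) (inv_nonneg.2 (by linarith [hb2 v c]))
  have hun : ∀ i γ, (∀ z ∈ S.e i, z ≠ v → ¬ Aff S D u z) →
      wt S (ynew S D b u P X y γ) i v c = wt S y i v c := by
    intro i γ h
    unfold wt
    refine sum_congr rfl fun f _ => prod_congr rfl fun z hz => ?_
    rw [mem_erase] at hz
    exact ynew_of_not_aff (h z hz.2 hz.1) _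
  by_cases hex : ∃ i z, v ∈ S.e i ∧ z ∈ S.e i ∧ z ≠ v ∧ Aff S D u z
  · obtain ⟨i0, z0, hv0, hz0, hzv0, haff0⟩ := hex
    have hother : ∀ i, i ≠ i0 → v ∈ S.e i → ∀ z ∈ S.e i, z ≠ v → ¬ Aff S D u z := by
      intro i hi hvi z hz hzv ha
      exact hi (claimC S hvD hvu hvi hz hzv ha hv0 hz0 hzv0 haff0).1
    have hsame : ∀ z ∈ S.e i0, z ≠ v → z ≠ z0 → ¬ Aff S D u z := by
      intro z hz hzv hzz ha
      exact hzz (claimC S hvD hvu hv0 hz hzv ha hv0 hz0 hzv0 haff0).2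
    have hz0D : z0 ∉ D := by
      rcases haff0 with rfl | h
      · exact huD
      · exact h.1
    have hi0 : i0 ∈ unfr S D v := by
      simp only [unfr, mem_filter, mem_univ, true_and]
      exact ⟨hv0, fun h => hz0D (h (mem_erase.2 ⟨hzv0, hz0⟩))⟩
    by_cases hi1 : i0 ∈ unfr S (insert u D) v
    ·
      have hnb : ∀ γ, ¬ Bk S D b u v c γ := by
        rintro γ ⟨-, -, i, h3, h4, h5, -⟩
        obtain ⟨rfl, rfl⟩ := claimC S hvD hvu h4 h3 hvu.symm (Or.inl rfl) hv0 hz0 hzv0 haff0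
        simp only [unfr, mem_filter, mem_univ, true_and] at hi1
        apply hi1.2
        intro z hz
        rw [mem_erase] at hz
        by_cases hzu : z = u
        · simp [hzu]
        · exact mem_insert_of_mem (h5 z hz.2 hzu hz.1)
      unfold Psi
      simp only [bet_eq_zero hnb, sub_zero, inv_one, mul_one]
      have e1 : ∀ γ, ∏ i ∈ unfr S (insert u D) v, (1 + s * wt S (ynew S D b u P X y γ) i v c)
          = (1 + s * wt S (ynew S D b u P X y γ) i0 v c) *
            ∏ i ∈ (unfr S (insert u D) v).erase i0, (1 + s * wt S y i v c) := by
        intro γ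
        rw [← mul_prod_erase _ _ hi1]
        congr 1
        refine prod_congr rfl fun i hi => ?_
        rw [mem_erase] at hi
        rw [hun]
        have := hsub hi.2
        simp only [unfr, mem_filter, mem_univ, true_and] at this
        exact hother i hi.1 this.1
      simp only [e1]
      have e2 : ∑ γ, P γ * wt S (ynew S D b u P X y γ) i0 v c = wt S y i0 v c := by
        unfold wt
        simp only [mul_sum]
        rw [sum_comm]
        refine sum_congr rfl fun f _ => ?_
        have hz0' : z0 ∈ (S.e i0).erase v := mem_erase.2 ⟨hzv0, hz0⟩
        have : ∀ γ, ∏ z ∈ (S.e i0).erase v, ynew S D b u P X y γ z (f z) =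
            ynew S D b u P X y γ z0 (f z0) * ∏ z ∈ ((S.e i0).erase v).erase z0, y z (f z) := by
          intro γ
          rw [← mul_prod_erase _ _ hz0']
          congr 1
          refine prod_congr rfl fun z hz => ?_
          simp only [mem_erase] at hz
          exact ynew_of_not_aff (hsame z hz.2.2 hz.2.1 hz.1) _
        simp only [this]
        simp only [← mul_assoc]
        rw [← sum_mul, avg_ynew hP hPy (by linarith [hb2 z0 (f z0)]), mul_prod_erase _ (fun z => y z (f z)) hz0']
      have e3 : ∑ γ, P γ * (Q v c ^ σ * ((1 + s * wt S (ynew S D b u P X y γ) i0 v c) *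
            ∏ i ∈ (unfr S (insert u D) v).erase i0, (1 + s * wt S y i v c)))
          = Q v c ^ σ * ((1 + s * ∑ γ, P γ * wt S (ynew S D b u P X y γ) i0 v c) *
            ∏ i ∈ (unfr S (insert u D) v).erase i0, (1 + s * wt S y i v c)) := by
        have : ∀ γ, P γ * (Q v c ^ σ * ((1 + s * wt S (ynew S D b u P X y γ) i0 v c) *
            ∏ i ∈ (unfr S (insert u D) v).erase i0, (1 + s * wt S y i v c)))
            = (P γ + s * (P γ * wt S (ynew S D b u P X y γ) i0 v c)) * (Q v c ^ σ *
            ∏ i ∈ (unfr S (insert u D) v).erase i0, (1 + s * wt S y i v c)) := by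
          intro γ; ring
        simp only [this]
        rw [← sum_mul, sum_add_distrib, hP, ← mul_sum]
        ring
      rw [e3, e2, mul_prod_erase _ (fun i => 1 + s * wt S y i v c) hi1]
      apply mul_le_mul_of_nonneg_left _ (by positivity)
      exact prod_le_prod_of_subset_of_one_le₀ hsub (fun i _ => by linarith [hterm i])
        (fun i _ _ => hterm i)
    ·
      have e1 : ∀ γ, ∏ i ∈ unfr S (insert u D) v, (1 + s * wt S (ynew S D b u P X y γ) i v c)
          = ∏ i ∈ unfr S (insert u D) v, (1 + s * wt S y i v c) := by
        intro γ
        refine prod_congr rfl fun i hi => ?_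
        rw [hun]
        have hne : i ≠ i0 := fun h => hi1 (h ▸ hi)
        have := hsub hi
        simp only [unfr, mem_filter, mem_univ, true_and] at this
        exact hother i hne this.1
      unfold Psi
      simp only [e1]
      rw [← sum_mul, hP, one_mul]
      have hsub2 : unfr S (insert u D) v ⊆ (unfr S D v).erase i0 := fun i hi =>
        mem_erase.2 ⟨fun h => hi1 (h ▸ hi), hsub hi⟩
      have e4 : ((1 - bet S D b u P v c)⁻¹) ^ σ ≤ 1 + s * wt S y i0 v c := by
        by_cases hbk : ∃ γ, Bk S D b u v c γ
        · obtain ⟨γ, hbk⟩ := hbk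
          have h2 := freeze_ineq σ _ hbet0 (hb2 v c) hb3
          refine h2.trans ?_
          have hbq := bet_eq hbk (P := P)
          obtain ⟨-, -, i, h3, h4, h5, f, hf, hfv, hfu, hfz⟩ := hbk
          obtain ⟨rfl, rfl⟩ := claimC S hvD hvu h4 h3 hvu.symm (Or.inl rfl) hv0 hz0 hzv0 haff0
          have h6 := hw i γ f hf h3 h4 hfv hfu (fun z hz h h' => ⟨h5 z hz h h', hfz z hz h h'⟩)
          rw [hbq, hs]
          have : 4 * (σ:ℝ) * P γ ≤ 4 * σ * (κ * wt S y i v c) :=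
            mul_le_mul_of_nonneg_left h6 (by positivity)
          linarith
        · push Not at hbk
          rw [bet_eq_zero hbk]
          simpa using hterm i0
      rw [mul_pow, mul_assoc]
      apply mul_le_mul_of_nonneg_left _ (by positivity)
      rw [← mul_prod_erase _ _ hi0]
      have hpr : ∀ T : Finset I, 0 ≤ ∏ i ∈ T, (1 + s * wt S y i v c) := fun T =>
        prod_nonneg fun i _ => by linarith [hterm i]
      exact mul_le_mul e4 (prod_le_prod_of_subset_of_one_le₀ hsub2
        (fun i _ => by linarith [hterm i]) (fun i _ _ => hterm i)) (hpr _)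
        (by linarith [hterm i0])
  · push Not at hex
    have hnb : ∀ γ, ¬ Bk S D b u v c γ := by
      rintro γ ⟨-, -, i, h3, h4, -⟩
      exact hex i u h4 h3 hvu.symm (Or.inl rfl)
    unfold Psi
    simp only [bet_eq_zero hnb, sub_zero, inv_one, mul_one]
    have e1 : ∀ γ, ∏ i ∈ unfr S (insert u D) v, (1 + s * wt S (ynew S D b u P X y γ) i v c)
          = ∏ i ∈ unfr S (insert u D) v, (1 + s * wt S y i v c) := by
      intro γ
      refine prod_congr rfl fun i hi => ?_
      rw [hun]
      have := hsub hi
      simp only [unfr, mem_filter, mem_univ, true_and] at this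
      exact fun z hz hzv => hex i z this.1 hz hzv
    simp only [e1]
    rw [← sum_mul, hP, one_mul]
    apply mul_le_mul_of_nonneg_left _ (by positivity)
    exact prod_le_prod_of_subset_of_one_le₀ hsub (fun i _ => by linarith [hterm i])
        (fun i _ _ => hterm i)

lemma xi_step (S : Sys V I B) (σ : ℕ) {D : Finset V} {b : V → Fin B} {u : V}
    {P : Fin B → ℝ} (hP0 : ∀ γ, 0 ≤ P γ) (hP : ∑ γ, P γ = 1)
    {X : ℝ} {y : V → Fin B → ℝ} (hy : ∀ v c, 0 ≤ y v c)
    {v : V} (hvu : v ≠ u)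
    (hb2 : ∀ v c, bet S D b u P v c ≤ 1 / 2) (hy2 : ∀ c, σ * y v c ≤ 1 / 4) :
    ∑ γ, P γ * Xi σ (ynew S D b u P X y γ) v ≤ Xi σ y v := by
  classical
  have hG : ∀ c, 0 < 1 - bet S D b u P v c := fun c => by linarith [hb2 v c]
  have h := neg_corr P hP0 hP (fun c γ => Bk S D b u v c γ)
    (fun c c' g h h' => (h.uniq h' (Or.inr rfl)).1)
    (fun c => 1 - σ * (y v c * (1 - bet S D b u P v c)⁻¹))
    (by
      intro c
      have : (1 - bet S D b u P v c)⁻¹ ≤ 2 := by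
        rw [inv_le_comm₀ (hG c) (by norm_num)]; linarith [hb2 v c]
      have h1 : (σ:ℝ) * y v c * (1 - bet S D b u P v c)⁻¹ ≤ 1/4 * 2 :=
        mul_le_mul (hy2 c) this (inv_nonneg.2 (hG c).le) (by norm_num)
      rw [mul_assoc] at h1
      linarith)
    (by
      intro c
      have : 0 ≤ (σ:ℝ) * (y v c * (1 - bet S D b u P v c)⁻¹) :=
        mul_nonneg (by positivity) (mul_nonneg (hy _ _) (inv_nonneg.2 (hG c).le))
      linarith)
  have e1 : ∀ γ, Xi σ (ynew S D b u P X y γ) v = ∏ c, (if Bk S D b u v c γ then 1 else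
      (1 - σ * (y v c * (1 - bet S D b u P v c)⁻¹))) := by
    intro γ
    unfold Xi ynew
    refine prod_congr rfl fun c _ => ?_
    rw [if_neg hvu]
    split_ifs <;> simp
  simp only [e1]
  refine h.trans (le_of_eq ?_)
  unfold Xi
  refine prod_congr rfl fun c _ => ?_
  change 1 - σ * (y v c * (1 - bet S D b u P v c)⁻¹) + bet S D b u P v c * _ = _
  have := (hG c).ne'
  field_simp
  ring

end
end EG

namespace EG
open Finset

set_option linter.unusedSectionVars false
section
variable {V I : Type} [Fintype V] [DecidableEq V] [Fintype I] [DecidableEq I] {B : ℕ}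

/-- The invariant kept while the vertices of `D` are colored one at a time. -/
structure Inv (S : Sys V I B) (σ : ℕ) (s θ θ' ζ : ℝ) (D : Finset V) (b : V → Fin B)
    (y Q : V → Fin B → ℝ) : Prop where
  y0 : ∀ v c, 0 ≤ y v c
  Q1 : ∀ v c, 1 ≤ Q v c
  Q2 : ∀ v, v ∉ D → ∀ c, Q v c ≤ 2 * ζ
  yQ : ∀ v, v ∉ D → ∀ c, y v c ≤ Q v c / B
  yD : ∀ v, v ∈ D → 1 / 4 ≤ y v (b v)
  avoid : ∀ i, S.e i ⊆ D → ∀ f ∈ S.F i, ∃ z ∈ S.e i, b z ≠ f z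
  zero : ∀ v, v ∉ D → ∀ i, v ∈ S.e i → (S.e i).erase v ⊆ D → ∀ f ∈ S.F i,
    (∀ z ∈ S.e i, z ≠ v → b z = f z) → y v (f v) = 0
  pot : ∑ v ∈ univ \ D, ((∑ c, θ * Psi S σ s D y Q v c) + θ' * Xi σ y v) ≤ 1

lemma Inv.start (S : Sys V I B) (hB : 0 < B) (σ : ℕ) (s θ θ' ζ lam : ℝ) (hs : 0 ≤ s)
    (hθ0 : 0 ≤ θ) (hθ' : 0 ≤ θ') (hσB : (σ : ℝ) ≤ B)
    (hζ : 1 ≤ ζ) (b : V → Fin B)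
    (hlam : ∀ v c, ∑ i ∈ univ.filter (fun i => v ∈ S.e i),
      (((S.F i).filter (fun f => f v = c)).card : ℝ) * (1 / (B : ℝ)) ^ ((S.e i).card - 1) ≤ lam)
    (h1 : Fintype.card V * (B * (θ * Real.exp (s * lam)) + θ' * Real.exp (-σ)) ≤ 1) :
    Inv S σ s θ θ' ζ ∅ b (fun _ _ => 1 / (B : ℝ)) (fun _ _ => 1) := by
  have hB' : (0:ℝ) < B := by exact_mod_cast hB
  have hwt : ∀ i v c, v ∈ S.e i → wt S (fun _ _ => 1 / (B : ℝ)) i v c =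
      (((S.F i).filter (fun f => f v = c)).card : ℝ) * (1 / (B : ℝ)) ^ ((S.e i).card - 1) := by
    intro i v c hv
    unfold wt
    simp [card_erase_of_mem hv]
  refine ⟨fun _ _ => by positivity, fun _ _ => le_rfl, fun _ _ _ => by linarith,
    fun _ _ _ => le_rfl, by simp, ?_, ?_, ?_⟩
  · intro i hi
    have := S.two i
    rw [subset_empty.1 hi] at this
    simp at this
  · intro v _ i hv hi
    have := S.two i
    rw [subset_empty] at hi
    have h2 := card_erase_of_mem hv
    rw [hi] at h2
    simp at h2
    omega
  · have hpsi : ∀ v c, Psi S σ s ∅ (fun _ _ => 1 / (B : ℝ)) (fun _ _ => 1) v c ≤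
        Real.exp (s * lam) := by
      intro v c
      unfold Psi
      rw [one_pow, one_mul]
      have hn : ∀ i, 0 ≤ s * wt S (fun _ _ => 1 / (B : ℝ)) i v c := fun i =>
        mul_nonneg hs (wt_nonneg (fun _ _ => by positivity) _ _ _)
      calc ∏ i ∈ unfr S ∅ v, (1 + s * wt S (fun _ _ => 1 / (B : ℝ)) i v c)
          ≤ ∏ i ∈ unfr S ∅ v, Real.exp (s * wt S (fun _ _ => 1 / (B : ℝ)) i v c) := by
            apply prod_le_prod
            · intro i _
              linarith [hn i]
            · intro i _
              rw [add_comm]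
              exact Real.add_one_le_exp _
        _ = Real.exp (∑ i ∈ unfr S ∅ v, s * wt S (fun _ _ => 1 / (B : ℝ)) i v c) := by
            rw [Real.exp_sum]
        _ ≤ Real.exp (s * lam) := by
            rw [Real.exp_le_exp, ← mul_sum]
            apply mul_le_mul_of_nonneg_left _ hs
            refine le_trans ?_ (hlam v c)
            have e : ∑ i ∈ univ.filter (fun i => v ∈ S.e i),
              (((S.F i).filter (fun f => f v = c)).card : ℝ) * (1 / (B : ℝ)) ^ ((S.e i).card - 1)
              = ∑ i ∈ univ.filter (fun i => v ∈ S.e i), wt S (fun _ _ => 1 / (B : ℝ)) i v c := by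
              refine sum_congr rfl fun i hi => ?_
              rw [hwt i v c (by simpa using hi)]
            rw [e]
            apply sum_le_sum_of_subset_of_nonneg
            · intro i hi
              simp only [unfr, mem_filter, mem_univ, true_and] at hi ⊢
              exact hi.1
            · intro i _ _
              exact wt_nonneg (fun _ _ => by positivity) _ _ _
    have hxi : ∀ v : V, Xi σ (fun (_ : V) (_ : Fin B) => 1 / (B : ℝ)) v ≤ Real.exp (-σ) := by
      intro v
      unfold Xi
      rw [prod_const, card_univ, Fintype.card_fin]
      have h0 : 0 ≤ 1 - (σ:ℝ) * (1 / B) := by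
        have : (σ:ℝ) * (1 / B) ≤ 1 := by
          rw [mul_one_div, div_le_one hB']; exact hσB
        linarith
      have h2 : 1 - (σ:ℝ) * (1 / B) ≤ Real.exp (-((σ:ℝ) * (1 / B))) := by
        have := Real.add_one_le_exp (-((σ:ℝ) * (1 / B)))
        linarith
      refine (pow_le_pow_left₀ h0 h2 B).trans (le_of_eq ?_)
      rw [← Real.exp_nat_mul]
      congr 1
      field_simp
    refine le_trans (sum_le_sum (g := fun _ => B * (θ * Real.exp (s * lam)) + θ' * Real.exp (-σ)) ?_) ?_
    · intro v _
      apply add_le_add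
      · refine (sum_le_sum (g := fun _ => θ * Real.exp (s * lam)) fun c _ =>
          mul_le_mul_of_nonneg_left (hpsi v c) hθ0).trans ?_
        simp
      · exact mul_le_mul_of_nonneg_left (hxi v) hθ'
    · simpa [mul_add] using h1

lemma Psi_nonneg {S : Sys V I B} {σ : ℕ} {s : ℝ} (hs : 0 ≤ s) {D : Finset V}
    {y Q : V → Fin B → ℝ} (hy : ∀ v c, 0 ≤ y v c) {v c} (hQ : 0 ≤ Q v c) :
    Q v c ^ σ ≤ Psi S σ s D y Q v c := by
  unfold Psi
  apply le_mul_of_one_le_right (pow_nonneg hQ _)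
  have h := prod_le_prod_of_subset_of_one_le₀ (s := ∅) (t := unfr S D v)
    (f := fun i => 1 + s * wt S y i v c) (empty_subset _) (by simp) (fun i _ _ => by
      have := mul_nonneg hs (wt_nonneg hy (S := S) i v c)
      linarith)
  rwa [prod_empty] at h

lemma Inv.step (S : Sys V I B) (k : ℕ) (hk : ∀ i, (S.e i).card ≤ k) (hB : 0 < B)
    (σ : ℕ) (hσ : 0 < σ) (s θ θ' ζ : ℝ)
    (hs : s = 4 * σ * 4 ^ k) (hθ : 0 < θ) (hθ' : 0 < θ') (hζ : 1 ≤ ζ)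
    (hσB : 16 * σ * ζ ≤ B) (h1 : θ⁻¹ ≤ ζ ^ σ) (h2 : θ'⁻¹ ≤ Real.exp (-(σ / 2 : ℝ)))
    {D : Finset V} {b : V → Fin B} {y Q : V → Fin B → ℝ} (H : Inv S σ s θ θ' ζ D b y Q)
    (u : V) (hu : u ∉ D) :
    ∃ b' y' Q', Inv S σ s θ θ' ζ (insert u D) b' y' Q' := by
  classical
  have hB' : (0:ℝ) < B := by exact_mod_cast hB
  have hσ' : (1:ℝ) ≤ σ := by exact_mod_cast hσ
  have hs0 : 0 ≤ s := by rw [hs]; positivity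
  have hQ0 : ∀ v c, 0 ≤ Q v c := fun v c => by linarith [H.Q1 v c]
  have hσy : ∀ v, v ∉ D → ∀ c, σ * y v c ≤ 1 / 8 := by
    intro v hv c
    have := (H.yQ v hv c).trans (div_le_div_of_nonneg_right (H.Q2 v hv c) hB'.le)
    calc σ * y v c ≤ σ * (2 * ζ / B) := mul_le_mul_of_nonneg_left this (by positivity)
      _ = (16 * σ * ζ) / B / 8 := by ring
      _ ≤ 1 / 8 := by
        apply div_le_div_of_nonneg_right _ (by norm_num)
        rw [div_le_one hB']; exact hσB
  have hXi0 : ∀ v, v ∉ D → 0 ≤ Xi σ y v := fun v hv =>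
    prod_nonneg fun c _ => by linarith [hσy v hv c]
  have hPsi0 : ∀ v c, 0 ≤ Psi S σ s D y Q v c := fun v c =>
    (pow_nonneg (hQ0 v c) σ).trans (Psi_nonneg hs0 H.y0 (hQ0 v c))
  have hterm0 : ∀ v, v ∉ D → 0 ≤ (∑ c, θ * Psi S σ s D y Q v c) + θ' * Xi σ y v := fun v hv =>
    add_nonneg (sum_nonneg fun c _ => mul_nonneg hθ.le (hPsi0 v c))
      (mul_nonneg hθ'.le (hXi0 v hv))
  have hterm1 : ∀ v, v ∉ D → (∑ c, θ * Psi S σ s D y Q v c) + θ' * Xi σ y v ≤ 1 := fun v hv =>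
    (single_le_sum (f := fun v => (∑ c, θ * Psi S σ s D y Q v c) + θ' * Xi σ y v)
      (fun w hw => hterm0 w (by simpa using hw)) (by simpa using hv)).trans H.pot
  have hQζ : ∀ v, v ∉ D → ∀ c, Q v c ≤ ζ := by
    intro v hv c
    have a1 := hterm1 v hv
    have a2 : θ * Psi S σ s D y Q v c ≤ ∑ c, θ * Psi S σ s D y Q v c :=
      single_le_sum (f := fun c => θ * Psi S σ s D y Q v c)
        (fun c _ => mul_nonneg hθ.le (hPsi0 v c)) (mem_univ c)
    have a3 := mul_nonneg hθ'.le (hXi0 v hv)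
    have a4 : θ * Psi S σ s D y Q v c ≤ 1 := by linarith
    have a5 : Psi S σ s D y Q v c ≤ θ⁻¹ := by
      rw [← one_div, le_div_iff₀ hθ]; linarith
    have a6 : Q v c ^ σ ≤ ζ ^ σ := ((Psi_nonneg hs0 H.y0 (hQ0 v c)).trans a5).trans h1
    exact le_of_pow_le_pow_left₀ hσ.ne' (by linarith) a6
  have hyζ : ∀ v, v ∉ D → ∀ c, y v c ≤ ζ / B := fun v hv c =>
    (H.yQ v hv c).trans (div_le_div_of_nonneg_right (hQζ v hv c) hB'.le)
  set X := ∑ c, y u c with hXdef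
  have hX : 1 / 4 ≤ X := by
    have a1 := hterm1 u hu
    have a2 : 0 ≤ ∑ c, θ * Psi S σ s D y Q u c :=
      sum_nonneg fun c _ => mul_nonneg hθ.le (hPsi0 u c)
    have a4 : θ' * Xi σ y u ≤ 1 := by linarith
    have a5 : Xi σ y u ≤ θ'⁻¹ := by
      rw [← one_div, le_div_iff₀ hθ']; linarith
    have a6 : Real.exp (-(2 * σ * X)) ≤ Xi σ y u := by
      have : -(2 * σ * X) = ∑ c, -(2 * (σ * y u c)) := by
        rw [hXdef, mul_sum, ← sum_neg_distrib]
        exact sum_congr rfl fun c _ => by ring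
      rw [this, Real.exp_sum]
      apply prod_le_prod (fun _ _ => (Real.exp_pos _).le)
      intro c _
      exact exp_le_one_sub _ (mul_nonneg (by positivity) (H.y0 _ _)) (by linarith [hσy u hu c])
    have a7 := Real.exp_le_exp.1 ((a6.trans a5).trans h2)
    nlinarith
  have hXp : 0 < X := by linarith
  set P : Fin B → ℝ := fun γ => y u γ / X with hPdef
  have hP0 : ∀ γ, 0 ≤ P γ := fun γ => div_nonneg (H.y0 _ _) hXp.le
  have hP1 : ∑ γ, P γ = 1 := by
    rw [hPdef, ← sum_div]
    exact div_self hXp.ne'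
  have hPy : ∀ γ, P γ * X = y u γ := fun γ => div_mul_cancel₀ _ hXp.ne'
  have hP4 : ∀ γ, P γ ≤ 4 * y u γ := fun γ => by
    rw [hPdef, div_le_iff₀ hXp]
    nlinarith [H.y0 u γ]
  have hPσ : ∀ γ, σ * P γ ≤ 1 / 4 := fun γ => by
    have := (hP4 γ).trans (mul_le_mul_of_nonneg_left (hyζ u hu γ) (by norm_num))
    calc σ * P γ ≤ σ * (4 * (ζ / B)) := mul_le_mul_of_nonneg_left this (by positivity)
      _ = (16 * σ * ζ) / B / 4 := by ring
      _ ≤ 1 / 4 := by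
        apply div_le_div_of_nonneg_right _ (by norm_num)
        rw [div_le_one hB']; exact hσB
  have hbσ : ∀ v c, σ * bet S D b u P v c ≤ 1 / 4 := by
    intro v c
    by_cases hbk : ∃ γ, Bk S D b u v c γ
    · obtain ⟨γ, h⟩ := hbk
      rw [bet_eq h]
      exact hPσ γ
    · push Not at hbk
      rw [bet_eq_zero hbk]; norm_num
  have hb0 : ∀ v c, 0 ≤ bet S D b u P v c := fun v c =>
    sum_nonneg fun γ _ => by split_ifs; exacts [hP0 γ, le_rfl]
  have hb2 : ∀ v c, bet S D b u P v c ≤ 1 / 2 := fun v c => by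
    nlinarith [hb0 v c, hbσ v c]
  have hinv2 : ∀ v c, (1 - bet S D b u P v c)⁻¹ ≤ 2 := fun v c => by
    rw [inv_le_comm₀ (by linarith [hb2 v c]) (by norm_num)]; linarith [hb2 v c]
  have hinv1 : ∀ v c, 1 ≤ (1 - bet S D b u P v c)⁻¹ := fun v c => by
    rw [one_le_inv₀ (by linarith [hb2 v c])]; linarith [hb0 v c]
  set Q' : V → Fin B → ℝ := fun v c => Q v c * (1 - bet S D b u P v c)⁻¹ with hQ'
  set y' := ynew S D b u P X y with hy'
  have havg : ∑ γ, P γ * ∑ v ∈ univ \ (insert u D),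
      ((∑ c, θ * Psi S σ s (insert u D) (y' γ) Q' v c) + θ' * Xi σ (y' γ) v) ≤ 1 := by
    have e1 : ∑ γ, P γ * ∑ v ∈ univ \ (insert u D),
      ((∑ c, θ * Psi S σ s (insert u D) (y' γ) Q' v c) + θ' * Xi σ (y' γ) v)
      = ∑ v ∈ univ \ (insert u D), ((∑ c, θ * ∑ γ, P γ * Psi S σ s (insert u D) (y' γ) Q' v c)
        + θ' * ∑ γ, P γ * Xi σ (y' γ) v) := by
      simp only [mul_sum, mul_add]
      rw [sum_comm]
      refine sum_congr rfl fun v _ => ?_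
      rw [sum_add_distrib]
      congr 1
      · rw [sum_comm]
        refine sum_congr rfl fun c _ => sum_congr rfl fun γ _ => by ring
      · refine sum_congr rfl fun γ _ => by ring
    rw [e1]
    refine le_trans ?_ H.pot
    refine le_trans (sum_le_sum (g := fun v => (∑ c, θ * Psi S σ s D y Q v c) + θ' * Xi σ y v) ?_) ?_
    · intro v hv
      simp only [mem_sdiff, mem_univ, true_and, mem_insert, not_or] at hv
      apply add_le_add
      · apply sum_le_sum
        intro c _
        apply mul_le_mul_of_nonneg_left _ hθ.le
        apply psi_step S σ s (4 ^ k) hs (by positivity) hP0 hP1 hPy hXp.le H.y0 hu hv.2 hv.1 c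
          (hQ0 v c) hb2 (hbσ v c)
        intro i γ f hf hui hvi hfv hfu hz
        have a1 : ∏ z ∈ (S.e i).erase v, y z (f z) ≤ wt S y i v c := by
          unfold wt
          exact single_le_sum (f := fun f : V → Fin B => ∏ z ∈ (S.e i).erase v, y z (f z))
            (fun f _ => prod_nonneg fun z _ => H.y0 _ _) (by simp [hf, hfv])
        have hu' : u ∈ (S.e i).erase v := mem_erase.2 ⟨Ne.symm hv.1, hui⟩
        rw [← mul_prod_erase _ _ hu'] at a1
        have a2 : (1 / 4 : ℝ) ^ (((S.e i).erase v).erase u).card ≤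
            ∏ z ∈ ((S.e i).erase v).erase u, y z (f z) := by
          rw [← prod_const]
          apply prod_le_prod (fun _ _ => by norm_num)
          intro z hz'
          simp only [mem_erase] at hz'
          obtain ⟨b1, b2⟩ := hz z hz'.2.2 hz'.1 hz'.2.1
          rw [← b2]
          exact H.yD z b1
        have hcard : (((S.e i).erase v).erase u).card + 1 ≤ k := by
          rw [card_erase_of_mem hu', card_erase_of_mem hvi]
          have := hk i
          have := S.two i
          omega
        have a3 : (4:ℝ) ≤ 4 ^ k * (1 / 4 : ℝ) ^ (((S.e i).erase v).erase u).card := by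
          obtain ⟨l, hl⟩ := Nat.exists_eq_add_of_le hcard
          rw [hl, pow_add, pow_add, pow_one, one_div, inv_pow]
          have : (1:ℝ) ≤ 4 ^ l := one_le_pow₀ (by norm_num)
          field_simp
          linarith
        rw [← hfu] at *
        calc P (f u) ≤ 4 * y u (f u) := hP4 _
          _ ≤ (4 ^ k * ∏ z ∈ ((S.e i).erase v).erase u, y z (f z)) * y u (f u) := by
              apply mul_le_mul_of_nonneg_right _ (H.y0 _ _)
              exact a3.trans (mul_le_mul_of_nonneg_left a2 (by positivity))
          _ = 4 ^ k * (y u (f u) * ∏ z ∈ ((S.e i).erase v).erase u, y z (f z)) := by ring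
          _ ≤ 4 ^ k * wt S y i v c := mul_le_mul_of_nonneg_left a1 (by positivity)
      · apply mul_le_mul_of_nonneg_left _ hθ'.le
        exact xi_step S σ hP0 hP1 H.y0 hv.1 hb2 (fun c => by linarith [hσy v hv.2 c])
    · apply sum_le_sum_of_subset_of_nonneg
      · exact sdiff_subset_sdiff subset_rfl (subset_insert _ _)
      · intro v hv _
        exact hterm0 v (by simpa using hv)
  obtain ⟨γ, hγ, hpot⟩ := avg_exists P _ hP0 hP1 1 havg
  have hyγ : y u γ ≠ 0 := by
    intro h
    rw [hPdef] at hγ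
    simp [h] at hγ
  refine ⟨Function.update b u γ, y' γ, Q', ?_, ?_, ?_, ?_, ?_, ?_, ?_, hpot⟩
  · intro v c
    rw [hy']
    unfold ynew
    split_ifs
    · exact hXp.le
    · exact le_rfl
    · exact le_rfl
    · exact mul_nonneg (H.y0 _ _) (by linarith [hinv1 v c])
  · intro v c
    exact one_le_mul_of_one_le_of_one_le (H.Q1 v c) (hinv1 v c)
  · intro v hv c
    simp only [mem_insert, not_or] at hv
    have := mul_le_mul (hQζ v hv.2 c) (hinv2 v c) (by linarith [hinv1 v c]) (by linarith)
    rw [hQ']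
    linarith
  · intro v hv c
    simp only [mem_insert, not_or] at hv
    rw [hy', hQ']
    unfold ynew
    rw [if_neg hv.1]
    have i0 := (zero_le_one).trans (hinv1 v c)
    split_ifs
    · exact div_nonneg (mul_nonneg (hQ0 _ _) i0) hB'.le
    · rw [mul_div_right_comm]
      exact mul_le_mul_of_nonneg_right (H.yQ v hv.2 c) i0
  · intro v hv
    by_cases hvu : v = u
    · subst hvu
      rw [hy']
      unfold ynew
      simpa using hX
    · have hvD : v ∈ D := by simpa [hvu] using hv
      rw [Function.update_of_ne hvu, hy', ynew_of_not_aff]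
      · exact H.yD v hvD
      · rintro (h | h)
        · exact hvu h
        · exact h.1 hvD
  · intro i hi f hf
    by_cases hui : u ∈ S.e i
    · by_contra hcon
      push Not at hcon
      have h3 : f u = γ := by
        have := hcon u hui
        simpa using this.symm
      apply hyγ
      rw [← h3]
      apply H.zero u hu i hui _ f hf
      · intro z hz hzu
        have := hcon z hz
        rwa [Function.update_of_ne hzu] at this
      · intro z hz
        rw [mem_erase] at hz
        exact (mem_insert.1 (hi hz.2)).resolve_left hz.1
    · obtain ⟨z, hz, hne⟩ := H.avoid i (fun z hz => (mem_insert.1 (hi hz)).resolve_left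
        (fun h => hui (h ▸ hz))) f hf
      refine ⟨z, hz, ?_⟩
      rwa [Function.update_of_ne]
      rintro rfl
      exact hui hz
  · intro v hv i hvi hi f hf hz
    simp only [mem_insert, not_or] at hv
    by_cases hui : u ∈ S.e i
    · have hbk : Bk S D b u v (f v) γ := by
        refine ⟨hv.2, hv.1, i, hui, hvi, ?_, f, hf, rfl, ?_, ?_⟩
        · intro z hz hzu hzv
          exact (mem_insert.1 (hi (mem_erase.2 ⟨hzv, hz⟩))).resolve_left hzu
        · have := hz u hui (Ne.symm hv.1)
          simpa using this.symm
        · intro z hze hzu hzv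
          have := hz z hze hzv
          rwa [Function.update_of_ne hzu] at this
      rw [hy']
      unfold ynew
      rw [if_neg hv.1, if_pos hbk]
    · have : y v (f v) = 0 := by
        apply H.zero v hv.2 i hvi _ f hf
        · intro z hze hzv
          have := hz z hze hzv
          rwa [Function.update_of_ne] at this
          rintro rfl
          exact hui hze
        · intro z hz'
          refine (mem_insert.1 (hi hz')).resolve_left ?_
          rintro rfl
          exact hui (mem_erase.1 hz').2
      rw [hy']
      unfold ynew
      rw [if_neg hv.1, this]
      simp

/-- The second phase. -/
theorem phaseB (S : Sys V I B) (k : ℕ) (hk : ∀ i, (S.e i).card ≤ k) (hB : 0 < B)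
    (σ : ℕ) (lam ζ : ℝ) (hζ : 1 ≤ ζ)
    (hlam : ∀ v c, ∑ i ∈ univ.filter (fun i => v ∈ S.e i),
      (((S.F i).filter (fun f => f v = c)).card : ℝ) * (1 / (B : ℝ)) ^ ((S.e i).card - 1) ≤ lam)
    (hσB : 16 * σ * ζ ≤ B)
    (h2 : 2 * (Fintype.card V : ℝ) ≤ Real.exp (σ / 2))
    (h1 : 2 * (Fintype.card V : ℝ) * B * Real.exp (4 ^ (k + 1) * σ * lam) ≤ ζ ^ σ) :
    ∃ b : V → Fin B, ∀ i, ∀ f ∈ S.F i, ∃ z ∈ S.e i, b z ≠ f z := by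
  have hB' : (0:ℝ) < B := by exact_mod_cast hB
  rcases isEmpty_or_nonempty V with hV | hV
  · refine ⟨fun v => (IsEmpty.false v).elim, fun i => ?_⟩
    have := S.two i
    rw [Finset.eq_empty_of_isEmpty (S.e i)] at this
    simp at this
  have hN : (1:ℝ) ≤ Fintype.card V := by exact_mod_cast Fintype.card_pos
  set N : ℝ := (Fintype.card V : ℝ) with hNdef
  have hσ : 0 < σ := by
    rcases Nat.eq_zero_or_pos σ with rfl | h
    · simp at h2; linarith
    · exact h
  set s : ℝ := 4 * σ * 4 ^ k with hs
  have hs' : 4 ^ (k + 1) * σ * lam = s * lam := by rw [hs]; ring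
  rw [hs'] at h1
  set θ : ℝ := (2 * N * B * Real.exp (s * lam))⁻¹ with hθ
  set θ' : ℝ := Real.exp σ / (2 * N) with hθ'
  have hE := Real.exp_pos (s * lam)
  have hE' := Real.exp_pos (σ : ℝ)
  have hθ0 : 0 < θ := by positivity
  have hθ'0 : 0 < θ' := by positivity
  have key : ∀ D : Finset V, ∃ b y Q, Inv S σ s θ θ' ζ D b y Q := by
    intro D
    induction D using Finset.induction_on with
    | empty =>
      refine ⟨fun _ => ⟨0, hB⟩, _, _, Inv.start S hB σ s θ θ' ζ lam (by positivity) hθ0.le hθ'0.le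
        ?_ hζ _ hlam (le_of_eq ?_)⟩
      · have : (0:ℝ) ≤ σ := by positivity
        nlinarith
      · rw [hθ, hθ', Real.exp_neg, ← hNdef]
        field_simp
        norm_num
    | insert u D hu ih =>
      obtain ⟨b, y, Q, H⟩ := ih
      refine Inv.step S k hk hB σ hσ s θ θ' ζ hs hθ0 hθ'0 hζ hσB ?_ ?_ H u hu
      · rw [hθ, inv_inv]; exact h1
      · rw [hθ', inv_div, div_le_iff₀ hE', ← Real.exp_add]
        refine h2.trans (le_of_eq ?_)
        congr 1; ring
  obtain ⟨b, y, Q, H⟩ := key univ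
  exact ⟨b, fun i f hf => H.avoid i (subset_univ _) f hf⟩

end
end EG

namespace EG
open Finset
set_option linter.unusedSectionVars false

/-- rank defect of a coloring on a set -/
def rk {E α : Type} [DecidableEq α] (a : E → α) (F : Finset E) : ℕ := F.card - (F.image a).card

lemma rk_add {E α : Type} [DecidableEq α] (a : E → α) (F : Finset E) :
    rk a F + (F.image a).card = F.card := Nat.sub_add_cancel card_image_le

section
variable {E α : Type} [Fintype E] [DecidableEq E] [DecidableEq α]

lemma rk_congr {a a' : E → α} {F : Finset E} (h : ∀ x ∈ F, a x = a' x) : rk a F = rk a' F := by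
  unfold rk
  rw [image_congr (fun x hx => h x (by simpa using hx))]

lemma rk_mono (a : E → α) {F G : Finset E} (h : F ⊆ G) : rk a F ≤ rk a G := by
  have h1 := rk_add a F
  have h2 := rk_add a G
  have h3 : (G.image a).card ≤ (F.image a).card + (G \ F).card := by
    calc (G.image a).card ≤ (F.image a ∪ (G \ F).image a).card := by
          apply card_le_card
          rw [← image_union, union_sdiff_of_subset h]
      _ ≤ _ := (card_union_le _ _).trans (by gcongr; exact card_image_le)
  have h4 := card_sdiff_add_card_eq_card h
  omega

lemma exists_red (a : E → α) (X W : Finset E) (hX : Set.InjOn a X) (hd : Disjoint X W) :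
    ∃ R ⊆ W, R.card = rk a (X ∪ W) ∧ ∀ x ∈ R, ∃ y ∈ X ∪ W, y ∉ R ∧ a x = a y := by
  induction W using Finset.induction_on with
  | empty =>
    refine ⟨∅, subset_rfl, ?_, by simp⟩
    unfold rk
    simp [card_image_of_injOn hX]
  | insert w W hw ih =>
    rw [disjoint_insert_right] at hd
    obtain ⟨R, hR, hc, hy⟩ := ih hd.2
    have hwF : w ∉ X ∪ W := by simp [hd.1, hw]
    have e1 : X ∪ insert w W = insert w (X ∪ W) := by rw [union_insert]
    rw [e1]
    have k1 := rk_add a (X ∪ W)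
    have k2 := rk_add a (insert w (X ∪ W))
    rw [image_insert, card_insert_of_notMem hwF] at k2
    have hwR : w ∉ R := fun h => hw (hR h)
    by_cases h : a w ∈ (X ∪ W).image a
    · rw [insert_eq_of_mem h] at k2
      refine ⟨insert w R, insert_subset_insert _ hR, ?_, ?_⟩
      · rw [card_insert_of_notMem hwR]; omega
      · have key : ∃ y ∈ X ∪ W, y ∉ R ∧ a w = a y := by
          obtain ⟨y, hyF, hya⟩ := mem_image.1 h
          by_cases hyR : y ∈ R
          · obtain ⟨y', h1, h2, h3⟩ := hy y hyR
            exact ⟨y', h1, h2, hya.symm.trans h3⟩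
          · exact ⟨y, hyF, hyR, hya.symm⟩
        have key2 : ∀ x, (∃ y ∈ X ∪ W, y ∉ R ∧ a x = a y) →
            ∃ y ∈ insert w (X ∪ W), y ∉ insert w R ∧ a x = a y := by
          rintro x ⟨y, h1, h2, h3⟩
          refine ⟨y, mem_insert_of_mem h1, ?_, h3⟩
          rw [mem_insert, not_or]
          exact ⟨fun h => hwF (h ▸ h1), h2⟩
        intro x hx
        rcases mem_insert.1 hx with rfl | hx
        · exact key2 _ key
        · exact key2 _ (hy x hx)
    · rw [card_insert_of_notMem h] at k2
      refine ⟨R, hR.trans (subset_insert _ _), by omega, ?_⟩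
      intro x hx
      obtain ⟨y, h1, h2, h3⟩ := hy x hx
      exact ⟨y, mem_insert_of_mem h1, h2, h3⟩

end

section
variable {E : Type} [Fintype E] [DecidableEq E] {A : ℕ}

/-- colorings agreeing with `a0` off `W` -/
def ag (W : Finset E) (a0 : E → Fin A) : Finset (E → Fin A) :=
  univ.filter (fun a => ∀ x, x ∉ W → a x = a0 x)

lemma mem_ag {W : Finset E} {a0 a : E → Fin A} : a ∈ ag W a0 ↔ ∀ x, x ∉ W → a x = a0 x := by
  simp [ag]

lemma card_ag (W : Finset E) (a0 : E → Fin A) : (ag W a0).card = A ^ W.card := by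
  have : ag W a0 = Fintype.piFinset (fun x => if x ∈ W then univ else {a0 x}) := by
    ext a
    rw [mem_ag, Fintype.mem_piFinset]
    refine forall_congr' fun x => ?_
    split_ifs with h <;> simp [h]
  rw [this, Fintype.card_piFinset]
  have : ∀ x, (if x ∈ W then (univ : Finset (Fin A)) else {a0 x}).card = if x ∈ W then A else 1 := by
    intro x; split_ifs <;> simp
  simp only [this]
  rw [prod_ite]
  simp

lemma ag_rk_bound (F W : Finset E) (hW : W ⊆ F) (hFW : (F \ W).card ≤ 1) (a0 : E → Fin A) (r : ℕ) :
    ((ag W a0).filter (fun a => r ≤ rk a F)).card * A ^ r ≤ (2 * F.card) ^ F.card * A ^ W.card := by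
  classical
  set T : Finset (Finset E × (F → F)) := (W.powersetCard r) ×ˢ univ with hT
  have hcov : (ag W a0).filter (fun a => r ≤ rk a F) ⊆ T.biUnion (fun t =>
      (ag W a0).filter (fun a => ∀ x : F, (x:E) ∈ t.1 → ((t.2 x : E) ∉ t.1 ∧ a x = a (t.2 x)))) := by
    intro a ha
    rw [mem_filter] at ha
    have hinj : Set.InjOn a (F \ W : Finset E) := by
      intro x hx y hy _
      exact card_le_one.1 hFW x (by simpa using hx) y (by simpa using hy)
    obtain ⟨R, hRW, hRc, hR⟩ := exists_red a (F \ W) W hinj sdiff_disjoint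
    rw [sdiff_union_of_subset hW] at hRc hR
    obtain ⟨R0, hR0, hR0c⟩ := exists_subset_card_eq (hRc ▸ ha.2)
    have : ∀ x : F, ∃ y : F, (x:E) ∈ R0 → ((y : E) ∉ R0 ∧ a x = a y) := by
      intro x
      by_cases hx : (x:E) ∈ R0
      · obtain ⟨y, h1, h2, h3⟩ := hR x (hR0 hx)
        exact ⟨⟨y, h1⟩, fun _ => ⟨fun h => h2 (hR0 h), h3⟩⟩
      · exact ⟨x, fun h => (hx h).elim⟩
    choose h hh using this
    rw [mem_biUnion]
    refine ⟨(R0, h), ?_, ?_⟩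
    · rw [hT, mem_product]
      exact ⟨mem_powersetCard.2 ⟨hR0.trans hRW, hR0c⟩, mem_univ _⟩
    · rw [mem_filter]
      exact ⟨ha.1, hh⟩
  have hone : ∀ t ∈ T, ((ag W a0).filter (fun a => ∀ x : F, (x:E) ∈ t.1 →
      ((t.2 x : E) ∉ t.1 ∧ a x = a (t.2 x)))).card * A ^ r ≤ A ^ W.card := by
    rintro ⟨R, h⟩ ht
    rw [hT, mem_product, mem_powersetCard] at ht
    obtain ⟨⟨hRW, hRc⟩, -⟩ := ht
    simp only at hRW hRc ⊢
    have hWc : (W \ R).card + r = W.card := by rw [← hRc]; exact card_sdiff_add_card_eq_card hRW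
    rw [← hWc, pow_add]
    apply Nat.mul_le_mul_right
    rw [← card_ag (W \ R) a0]
    apply card_le_card_of_injOn (fun a x => if x ∈ R then a0 x else a x)
    · intro a ha
      simp only [coe_filter, Set.mem_ofPred_eq, mem_ag] at ha
      rw [mem_coe, mem_ag]
      intro x hx
      simp only [mem_sdiff, not_and, not_not] at hx
      by_cases hxR : x ∈ R
      · simp [hxR]
      · simp only [hxR, if_false]
        exact ha.1 x (fun h => hxR (hx h))
    · intro a ha a' ha' hEq
      simp only [coe_filter, Set.mem_ofPred_eq] at ha ha'
      have hoff : ∀ x, x ∉ R → a x = a' x := by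
        intro x hx
        have := congrFun hEq x
        simpa [hx] using this
      funext x
      by_cases hx : x ∈ R
      · have h1 := ha.2 ⟨x, hW (hRW hx)⟩ hx
        have h2 := ha'.2 ⟨x, hW (hRW hx)⟩ hx
        rw [h1.2, h2.2]
        exact hoff _ h1.1
      · exact hoff x hx
  calc ((ag W a0).filter (fun a => r ≤ rk a F)).card * A ^ r
      ≤ (∑ t ∈ T, ((ag W a0).filter (fun a => ∀ x : F, (x:E) ∈ t.1 →
      ((t.2 x : E) ∉ t.1 ∧ a x = a (t.2 x)))).card) * A ^ r := by
        apply Nat.mul_le_mul_right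
        exact (card_le_card hcov).trans card_biUnion_le
    _ = ∑ t ∈ T, ((ag W a0).filter (fun a => ∀ x : F, (x:E) ∈ t.1 →
      ((t.2 x : E) ∉ t.1 ∧ a x = a (t.2 x)))).card * A ^ r := by rw [sum_mul]
    _ ≤ ∑ t ∈ T, A ^ W.card := sum_le_sum hone
    _ = T.card * A ^ W.card := by simp
    _ ≤ _ := by
        apply Nat.mul_le_mul_right
        rw [hT, card_product, mul_pow, card_powersetCard]
        apply Nat.mul_le_mul
        · exact (Nat.choose_le_two_pow _ _).trans (Nat.pow_le_pow_right (by norm_num) (card_le_card hW))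
        · simp

/-- conditioning lemma -/
lemma cond_bound (W : Finset E) (φ ψ : (E → Fin A) → Prop) [DecidablePred φ] [DecidablePred ψ]
    (hφ : ∀ a a', (∀ x, x ∉ W → a x = a' x) → φ a → φ a') (M K : ℕ)
    (hψ : ∀ a0, ((ag W a0).filter ψ).card * K ≤ M * A ^ W.card) (hA : 0 < A) :
    (univ.filter (fun a => φ a ∧ ψ a)).card * K ≤ M * (univ.filter φ).card := by
  have h1 : ∑ a ∈ univ.filter φ, ((ag W a).filter ψ).card =
      ∑ a ∈ univ.filter (fun a => φ a ∧ ψ a), (ag W a).card := by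
    have l : ∀ a : E → Fin A, ((ag W a).filter ψ).card =
        ∑ a' : E → Fin A, if (∀ x, x ∉ W → a' x = a x) ∧ ψ a' then 1 else 0 := by
      intro a
      rw [ag, filter_filter, card_filter]
    have l2 : ∀ a : E → Fin A, (ag W a).card =
        ∑ a' : E → Fin A, if (∀ x, x ∉ W → a' x = a x) then 1 else 0 := by
      intro a
      rw [ag, card_filter]
    simp only [l, l2]
    rw [sum_filter, sum_filter]
    have e1 : ∀ a : E → Fin A, (if φ a then ∑ a' : E → Fin A, (if (∀ x, x ∉ W → a' x = a x) ∧ ψ a' then 1 else 0) else 0)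
        = ∑ a' : E → Fin A, if φ a ∧ (∀ x, x ∉ W → a' x = a x) ∧ ψ a' then 1 else 0 := by
      intro a
      split_ifs with h <;> simp [h]
    have e2 : ∀ a : E → Fin A, (if φ a ∧ ψ a then ∑ a' : E → Fin A, (if (∀ x, x ∉ W → a' x = a x) then 1 else 0) else 0)
        = ∑ a' : E → Fin A, if (φ a ∧ ψ a) ∧ (∀ x, x ∉ W → a' x = a x) then 1 else 0 := by
      intro a
      split_ifs with h
      · simp only [h.1, h.2, and_self, true_and]
      · rw [sum_eq_zero]
        intro a' _
        rw [if_neg]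
        exact fun h' => h h'.1
    simp only [e1, e2]
    rw [sum_comm]
    refine sum_congr rfl fun a' _ => sum_congr rfl fun a _ => ?_
    refine if_congr ?_ rfl rfl
    constructor
    · rintro ⟨h1, h2, h3⟩
      exact ⟨⟨hφ a a' (fun x hx => (h2 x hx).symm) h1, h3⟩, fun x hx => (h2 x hx).symm⟩
    · rintro ⟨⟨h1, h2⟩, h3⟩
      exact ⟨hφ a' a (fun x hx => (h3 x hx).symm) h1, fun x hx => (h3 x hx).symm, h2⟩
  simp only [card_ag, sum_const, smul_eq_mul] at h1
  have h2 : (∑ a ∈ univ.filter φ, ((ag W a).filter ψ).card) * K ≤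
      (univ.filter φ).card * (M * A ^ W.card) := by
    rw [sum_mul, ← smul_eq_mul (b := M * A ^ W.card), ← sum_const]
    exact sum_le_sum fun a _ => hψ a
  rw [h1] at h2
  have h3 : 0 < A ^ W.card := pow_pos hA _
  apply Nat.le_of_mul_le_mul_right _ h3
  linarith

end
end EG

namespace EG
open Finset
set_option linter.unusedSectionVars false

section
variable {E : Type} [Fintype E] [DecidableEq E] {A : ℕ}

def Good (𝒰 : Finset (Finset E)) (ρ : Finset E → ℕ) (G : Finset E) (a : E → Fin A) : Prop :=
  ∀ U ∈ 𝒰, rk a (U ∩ G) ≤ ρ U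

instance (𝒰 : Finset (Finset E)) (ρ : Finset E → ℕ) (G : Finset E) (a : E → Fin A) :
    Decidable (Good 𝒰 ρ G a) := by unfold Good; infer_instance

def ZG (A : ℕ) (𝒰 : Finset (Finset E)) (ρ : Finset E → ℕ) (G : Finset E) : ℕ :=
  (univ.filter (fun a : E → Fin A => Good 𝒰 ρ G a)).card

lemma Good.mono {𝒰 : Finset (Finset E)} {ρ : Finset E → ℕ} {G G' : Finset E} {a : E → Fin A}
    (h : Good 𝒰 ρ G a) (hG : G' ⊆ G) : Good 𝒰 ρ G' a := fun U hU =>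
  (rk_mono a (inter_subset_inter subset_rfl hG)).trans (h U hU)

lemma Good.congr {𝒰 : Finset (Finset E)} {ρ : Finset E → ℕ} {G : Finset E} {a a' : E → Fin A}
    (h : Good 𝒰 ρ G a) (hG : ∀ x ∈ G, a x = a' x) : Good 𝒰 ρ G a' := fun U hU => by
  rw [← rk_congr (a := a)]
  · exact h U hU
  · intro x hx
    exact hG x (mem_inter.1 hx).2

lemma pow_self_mono {c m e : ℕ} (hc : 1 ≤ c) (h : m ≤ e) : (c * m) ^ m ≤ (c * e) ^ e := by
  rcases Nat.eq_zero_or_pos e with rfl | he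
  · simp at h; subst h; simp
  · calc (c * m) ^ m ≤ (c * e) ^ m := Nat.pow_le_pow_left (Nat.mul_le_mul_left _ h) _
      _ ≤ (c * e) ^ e := Nat.pow_le_pow_right (Nat.mul_pos hc he) h

lemma ZG_chain {𝒰 : Finset (Finset E)} {ρ : Finset E → ℕ} (n : ℕ)
    (hn : ∀ G : Finset E, ∀ g, g ∉ G → G.card < n → ZG A 𝒰 ρ G ≤ 2 * ZG A 𝒰 ρ (insert g G))
    (G W : Finset E) (hd : Disjoint G W) (hc : (G ∪ W).card ≤ n) :
    ZG A 𝒰 ρ G ≤ 2 ^ W.card * ZG A 𝒰 ρ (G ∪ W) := by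
  induction W using Finset.induction_on with
  | empty => simp
  | insert w W hw ih =>
    rw [disjoint_insert_right] at hd
    have hwG : w ∉ G ∪ W := by simp [hd.1, hw]
    rw [union_insert, card_insert_of_notMem hwG] at hc
    have h1 := ih hd.2 (by omega)
    have h2 := hn (G ∪ W) w hwG (by omega)
    rw [union_insert, card_insert_of_notMem hw, pow_succ]
    calc _ ≤ _ := h1
      _ ≤ 2 ^ W.card * (2 * ZG A 𝒰 ρ (insert w (G ∪ W))) := Nat.mul_le_mul_left _ h2
      _ = _ := by ring

lemma ZG_step (hA : 0 < A) (𝒰 : Finset (Finset E)) (ρ : Finset E → ℕ)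
    (H1 : ∀ g, ∑ U ∈ 𝒰.filter (fun U => g ∈ U),
      ((4 * U.card : ℕ) : ℝ) ^ U.card * (1 / (A:ℝ)) ^ (ρ U + 1) ≤ 1 / 2) :
    ∀ n : ℕ, ∀ G : Finset E, ∀ g, g ∉ G → G.card < n →
      ZG A 𝒰 ρ G ≤ 2 * ZG A 𝒰 ρ (insert g G) := by
  intro n
  induction n with
  | zero => intro G g _ h; omega
  | succ n ih =>
    intro G g hg hGc
    have hA' : (0:ℝ) < A := by exact_mod_cast hA
    set Bad : Finset E → Finset (E → Fin A) := fun U => univ.filter (fun a =>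
      Good 𝒰 ρ (G \ U) a ∧ ρ U + 1 ≤ rk a (U ∩ insert g G)) with hBad
    have hcov : univ.filter (fun a : E → Fin A => Good 𝒰 ρ G a) ⊆
        univ.filter (fun a : E → Fin A => Good 𝒰 ρ (insert g G) a) ∪
        (𝒰.filter (fun U => g ∈ U)).biUnion Bad := by
      intro a ha
      simp only [mem_filter, mem_univ, true_and] at ha
      rw [mem_union]
      by_cases h : Good 𝒰 ρ (insert g G) a
      · left; simpa using h
      · right
        unfold Good at h
        push Not at h
        obtain ⟨U, hU, h⟩ := h
        rw [mem_biUnion]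
        refine ⟨U, ?_, ?_⟩
        · rw [mem_filter]
          refine ⟨hU, ?_⟩
          by_contra hgU
          have : U ∩ insert g G = U ∩ G := by
            rw [inter_insert_of_notMem hgU]
          rw [this] at h
          exact absurd (ha U hU) (by omega)
        · simp only [hBad, mem_filter, mem_univ, true_and]
          exact ⟨ha.mono sdiff_subset, h⟩
    have hone : ∀ U ∈ 𝒰.filter (fun U => g ∈ U), ((Bad U).card : ℝ) ≤
        ((4 * U.card : ℕ) : ℝ) ^ U.card * (1 / (A:ℝ)) ^ (ρ U + 1) * ZG A 𝒰 ρ G := by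
      intro U hU
      rw [mem_filter] at hU
      have c1 := cond_bound (A := A) (U ∩ insert g G) (fun a => Good 𝒰 ρ (G \ U) a)
        (fun a => ρ U + 1 ≤ rk a (U ∩ insert g G)) (by
          intro a a' h hg'
          refine hg'.congr fun x hx => h x ?_
          rw [mem_sdiff] at hx
          exact fun h => hx.2 (mem_inter.1 h).1)
        ((2 * (U ∩ insert g G).card) ^ (U ∩ insert g G).card) (A ^ (ρ U + 1))
        (fun a0 => ag_rk_bound _ _ subset_rfl (by simp) a0 _) hA
      have c2 : ZG A 𝒰 ρ (G \ U) ≤ 2 ^ (G ∩ U).card * ZG A 𝒰 ρ G := by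
        have := ZG_chain (A := A) (𝒰 := 𝒰) (ρ := ρ) n ih (G \ U) (G ∩ U)
          (disjoint_sdiff_inter G U) (by rw [sdiff_union_inter]; omega)
        rwa [sdiff_union_inter] at this
      have c3 : (2 * (U ∩ insert g G).card) ^ (U ∩ insert g G).card ≤ (2 * U.card) ^ U.card :=
        pow_self_mono (by norm_num) (card_le_card inter_subset_left)
      have c4 : 2 ^ (G ∩ U).card ≤ 2 ^ U.card :=
        Nat.pow_le_pow_right (by norm_num) (card_le_card inter_subset_right)
      have c5 : (Bad U).card * A ^ (ρ U + 1) ≤ (4 * U.card) ^ U.card * ZG A 𝒰 ρ G := by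
        calc (Bad U).card * A ^ (ρ U + 1) ≤ _ := c1
          _ ≤ (2 * U.card) ^ U.card * (2 ^ U.card * ZG A 𝒰 ρ G) :=
            Nat.mul_le_mul c3 (c2.trans (Nat.mul_le_mul_right _ c4))
          _ = (4 * U.card) ^ U.card * ZG A 𝒰 ρ G := by
            rw [← mul_assoc, ← mul_pow]; congr 2; ring
      have c6 : ((Bad U).card : ℝ) * (A:ℝ) ^ (ρ U + 1) ≤
        ((4 * U.card : ℕ) : ℝ) ^ U.card * ZG A 𝒰 ρ G := by exact_mod_cast c5
      rw [one_div, inv_pow]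
      have hpos : (0:ℝ) < (A:ℝ) ^ (ρ U + 1) := by positivity
      calc ((Bad U).card : ℝ) ≤ ((4 * U.card : ℕ) : ℝ) ^ U.card * ZG A 𝒰 ρ G / (A:ℝ) ^ (ρ U + 1) := by
            rw [le_div_iff₀ hpos]; exact c6
        _ = _ := by field_simp
    have h2 : (ZG A 𝒰 ρ G : ℝ) ≤ ZG A 𝒰 ρ (insert g G) + 1 / 2 * ZG A 𝒰 ρ G := by
      have h3 : ZG A 𝒰 ρ G ≤ ZG A 𝒰 ρ (insert g G) +
          ∑ U ∈ 𝒰.filter (fun U => g ∈ U), (Bad U).card :=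
        (card_le_card hcov).trans ((card_union_le _ _).trans (by gcongr; exacts [le_rfl, card_biUnion_le]))
      have h4 : (ZG A 𝒰 ρ G : ℝ) ≤ ZG A 𝒰 ρ (insert g G) +
          ∑ U ∈ 𝒰.filter (fun U => g ∈ U), ((Bad U).card : ℝ) := by exact_mod_cast h3
      refine h4.trans ?_
      gcongr
      refine (sum_le_sum hone).trans ?_
      rw [← sum_mul]
      exact mul_le_mul_of_nonneg_right (H1 g) (by positivity)
    have h5 : (ZG A 𝒰 ρ G : ℝ) ≤ 2 * ZG A 𝒰 ρ (insert g G) := by linarith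
    exact_mod_cast h5

lemma ZG_sdiff (hA : 0 < A) (𝒰 : Finset (Finset E)) (ρ : Finset E → ℕ)
    (H1 : ∀ g, ∑ U ∈ 𝒰.filter (fun U => g ∈ U),
      ((4 * U.card : ℕ) : ℝ) ^ U.card * (1 / (A:ℝ)) ^ (ρ U + 1) ≤ 1 / 2) (G W : Finset E) :
    ZG A 𝒰 ρ (G \ W) ≤ 2 ^ W.card * ZG A 𝒰 ρ G := by
  have := ZG_chain (A := A) (𝒰 := 𝒰) (ρ := ρ) _ (ZG_step hA 𝒰 ρ H1 G.card) (G \ W) (G ∩ W)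
          (disjoint_sdiff_inter G W) (by rw [sdiff_union_inter])
  rw [sdiff_union_inter] at this
  exact this.trans (Nat.mul_le_mul_right _ (Nat.pow_le_pow_right (by norm_num)
    (card_le_card inter_subset_right)))

lemma petals (hA : 0 < A) (𝒰 : Finset (Finset E)) (ρ : Finset E → ℕ)
    (H1 : ∀ g, ∑ U ∈ 𝒰.filter (fun U => g ∈ U),
      ((4 * U.card : ℕ) : ℝ) ^ U.card * (1 / (A:ℝ)) ^ (ρ U + 1) ≤ 1 / 2)
    (f : E) (e r : ℕ) (PP : Finset (Finset E)) (hPP : ∀ S ∈ PP, f ∈ S ∧ S.card ≤ e)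
    (hd : ∀ S ∈ PP, ∀ S' ∈ PP, S ≠ S' → S ∩ S' ⊆ {f}) (G : Finset E) :
    (univ.filter (fun a : E → Fin A => Good 𝒰 ρ G a ∧ ∀ S ∈ PP, r ≤ rk a S)).card
      * (A ^ r) ^ PP.card ≤ ((4 * e) ^ e) ^ PP.card * ZG A 𝒰 ρ G := by
  induction PP using Finset.induction_on generalizing G with
  | empty => simp [ZG]
  | insert S PP hS ih =>
    have hfS := hPP S (mem_insert_self _ _)
    have ih' := ih (fun S hS => hPP S (mem_insert_of_mem hS))
      (fun S hS S' hS' => hd S (mem_insert_of_mem hS) S' (mem_insert_of_mem hS')) (G \ S.erase f)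
    have c1 := cond_bound (A := A) (S.erase f)
        (fun a => Good 𝒰 ρ (G \ S.erase f) a ∧ ∀ S ∈ PP, r ≤ rk a S)
        (fun a => r ≤ rk a S) (by
          rintro a a' h ⟨hg', hp⟩
          refine ⟨hg'.congr fun x hx => h x ?_, ?_⟩
          · rw [mem_sdiff] at hx
            exact hx.2
          · intro S' hS'
            rw [← rk_congr (a := a)]
            · exact hp S' hS'
            · intro x hx
              apply h
              intro hxS
              rw [mem_erase] at hxS
              have := hd S (mem_insert_self _ _) S' (mem_insert_of_mem hS')
                (fun h => hS (h ▸ hS')) (mem_inter.2 ⟨hxS.2, hx⟩)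
              exact hxS.1 (mem_singleton.1 this))
        ((2 * S.card) ^ S.card) (A ^ r)
        (fun a0 => ag_rk_bound S (S.erase f) (erase_subset _ _) (by
          rw [sdiff_erase_self hfS.1]; simp) a0 _) hA
    have c2 := ZG_sdiff hA 𝒰 ρ H1 G (S.erase f)
    have c3 : (2 * S.card) ^ S.card * 2 ^ (S.erase f).card ≤ (4 * e) ^ e := by
      calc (2 * S.card) ^ S.card * 2 ^ (S.erase f).card ≤ (2 * S.card) ^ S.card * 2 ^ S.card := by
            apply Nat.mul_le_mul_left
            exact Nat.pow_le_pow_right (by norm_num) (card_le_card (erase_subset _ _))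
        _ = (4 * S.card) ^ S.card := by rw [← mul_pow]; congr 1; ring
        _ ≤ _ := pow_self_mono (by norm_num) hfS.2
    have c4 : (univ.filter (fun a : E → Fin A => Good 𝒰 ρ G a ∧ ∀ S' ∈ insert S PP, r ≤ rk a S')).card
        ≤ (univ.filter (fun a : E → Fin A => (Good 𝒰 ρ (G \ S.erase f) a ∧ ∀ S ∈ PP, r ≤ rk a S) ∧
          r ≤ rk a S)).card := by
      apply card_le_card
      intro a ha
      simp only [mem_filter, mem_univ, true_and, mem_insert, forall_eq_or_imp] at ha ⊢
      exact ⟨⟨ha.1.mono sdiff_subset, ha.2.2⟩, ha.2.1⟩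
    rw [card_insert_of_notMem hS, pow_succ, pow_succ]
    set N0 := (univ.filter (fun a : E → Fin A => Good 𝒰 ρ (G \ S.erase f) a ∧ ∀ S ∈ PP, r ≤ rk a S)).card
    calc _ ≤ (univ.filter (fun a : E → Fin A => (Good 𝒰 ρ (G \ S.erase f) a ∧ ∀ S ∈ PP, r ≤ rk a S) ∧
          r ≤ rk a S)).card * ((A ^ r) ^ PP.card * A ^ r) := Nat.mul_le_mul_right _ c4
      _ = (univ.filter (fun a : E → Fin A => (Good 𝒰 ρ (G \ S.erase f) a ∧ ∀ S ∈ PP, r ≤ rk a S) ∧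
          r ≤ rk a S)).card * A ^ r * (A ^ r) ^ PP.card := by ring
      _ ≤ (2 * S.card) ^ S.card * N0 * (A ^ r) ^ PP.card := Nat.mul_le_mul_right _ c1
      _ = (2 * S.card) ^ S.card * (N0 * (A ^ r) ^ PP.card) := by ring
      _ ≤ (2 * S.card) ^ S.card * (((4 * e) ^ e) ^ PP.card * (2 ^ (S.erase f).card * ZG A 𝒰 ρ G)) :=
        Nat.mul_le_mul_left _ (ih'.trans (Nat.mul_le_mul_left _ c2))
      _ = ((4 * e) ^ e) ^ PP.card * ((2 * S.card) ^ S.card * 2 ^ (S.erase f).card) * ZG A 𝒰 ρ G := by ring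
      _ ≤ _ := by
        apply Nat.mul_le_mul_right
        exact Nat.mul_le_mul_left _ c3

/-- The first phase. -/
theorem phaseA (hA : 0 < A) (𝒰 : Finset (Finset E)) (ρ : Finset E → ℕ)
    (H1 : ∀ g, ∑ U ∈ 𝒰.filter (fun U => g ∈ U),
      ((4 * U.card : ℕ) : ℝ) ^ U.card * (1 / (A:ℝ)) ^ (ρ U + 1) ≤ 1 / 2)
    {T : Type} [Fintype T] (f : T → E) (C : T → Finset (Finset E)) (e : ℕ)
    (hC : ∀ t, ∀ S ∈ C t, f t ∈ S ∧ S.card ≤ e) (r m : T → ℕ)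
    (H2 : ∑ t, (((C t).card.choose (m t) : ℕ) : ℝ) *
      (((4 * e : ℕ) : ℝ) ^ e * (1 / (A:ℝ)) ^ (r t)) ^ (m t) < 1) :
    ∃ a : E → Fin A, (∀ U ∈ 𝒰, rk a U ≤ ρ U) ∧ ∀ t, ∀ PP ⊆ C t, PP.card = m t →
      (∀ S ∈ PP, ∀ S' ∈ PP, S ≠ S' → S ∩ S' ⊆ {f t}) → ∃ S ∈ PP, rk a S < r t := by
  classical
  by_contra hcon
  push Not at hcon
  have hA' : (0:ℝ) < A := by exact_mod_cast hA
  have hZ : 0 < ZG A 𝒰 ρ univ := by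
    have h1 := ZG_sdiff hA 𝒰 ρ H1 univ univ
    have h2 : 0 < ZG A 𝒰 ρ (univ \ univ) := by
      unfold ZG
      rw [card_pos]
      refine ⟨fun _ => ⟨0, hA⟩, ?_⟩
      simp [Good, rk]
    by_contra h0
    have : ZG A 𝒰 ρ univ = 0 := by omega
    rw [this] at h1
    omega
  set 𝒟 : T → Finset (Finset (Finset E)) := fun t => ((C t).powersetCard (m t)).filter
    (fun PP => ∀ S ∈ PP, ∀ S' ∈ PP, S ≠ S' → S ∩ S' ⊆ {f t}) with h𝒟
  have hcov : univ.filter (fun a : E → Fin A => Good 𝒰 ρ univ a) ⊆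
      univ.biUnion (fun t => (𝒟 t).biUnion (fun PP =>
        univ.filter (fun a : E → Fin A => Good 𝒰 ρ univ a ∧ ∀ S ∈ PP, r t ≤ rk a S))) := by
    intro a ha
    simp only [mem_filter, mem_univ, true_and] at ha
    obtain ⟨t, PP, h1, h2, h3, h4⟩ := hcon a (fun U hU => by simpa using ha U hU)
    simp only [mem_biUnion, mem_univ, true_and]
    refine ⟨t, PP, ?_, ?_⟩
    · simp only [h𝒟, mem_filter, mem_powersetCard]
      exact ⟨⟨h1, h2⟩, h3⟩
    · simp only [mem_filter, mem_univ, true_and]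
      exact ⟨ha, h4⟩
  have hone : ∀ t, ∀ PP ∈ 𝒟 t, ((univ.filter (fun a : E → Fin A =>
      Good 𝒰 ρ univ a ∧ ∀ S ∈ PP, r t ≤ rk a S)).card : ℝ) ≤
      (((4 * e : ℕ) : ℝ) ^ e * (1 / (A:ℝ)) ^ (r t)) ^ (m t) * ZG A 𝒰 ρ univ := by
    intro t PP h
    simp only [h𝒟, mem_filter, mem_powersetCard] at h
    have h1 := petals hA 𝒰 ρ H1 (f t) e (r t) PP (fun S hS => hC t S (h.1.1 hS)) h.2 univ
    rw [h.1.2] at h1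
    have h2 : ((univ.filter (fun a : E → Fin A =>
      Good 𝒰 ρ univ a ∧ ∀ S ∈ PP, r t ≤ rk a S)).card : ℝ) * ((A:ℝ) ^ (r t)) ^ (m t) ≤
      (((4 * e : ℕ) : ℝ) ^ e) ^ (m t) * ZG A 𝒰 ρ univ := by exact_mod_cast h1
    have hpos : (0:ℝ) < ((A:ℝ) ^ (r t)) ^ (m t) := by positivity
    rw [mul_pow, one_div, inv_pow, inv_pow, mul_right_comm, ← div_eq_mul_inv, le_div_iff₀ hpos]
    exact h2
  have h3 : (ZG A 𝒰 ρ univ : ℝ) ≤ ∑ t, ∑ PP ∈ 𝒟 t, ((univ.filter (fun a : E → Fin A =>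
      Good 𝒰 ρ univ a ∧ ∀ S ∈ PP, r t ≤ rk a S)).card : ℝ) := by
    have : ZG A 𝒰 ρ univ ≤ ∑ t, ∑ PP ∈ 𝒟 t, (univ.filter (fun a : E → Fin A =>
      Good 𝒰 ρ univ a ∧ ∀ S ∈ PP, r t ≤ rk a S)).card :=
      (card_le_card hcov).trans (card_biUnion_le.trans (sum_le_sum fun t _ => card_biUnion_le))
    exact_mod_cast this
  have h4 : ∑ t, ∑ PP ∈ 𝒟 t, ((univ.filter (fun a : E → Fin A =>
      Good 𝒰 ρ univ a ∧ ∀ S ∈ PP, r t ≤ rk a S)).card : ℝ) ≤ (∑ t, (((C t).card.choose (m t) : ℕ) : ℝ) *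
      (((4 * e : ℕ) : ℝ) ^ e * (1 / (A:ℝ)) ^ (r t)) ^ (m t)) * ZG A 𝒰 ρ univ := by
    rw [sum_mul]
    refine sum_le_sum fun t _ => ?_
    refine (sum_le_sum (hone t)).trans ?_
    rw [sum_const, nsmul_eq_mul, mul_assoc]
    apply mul_le_mul_of_nonneg_right _ (by positivity)
    have : (𝒟 t).card ≤ (C t).card.choose (m t) := by
      rw [← card_powersetCard]
      exact card_le_card (filter_subset _ _)
    exact_mod_cast this
  have hZ' : (0:ℝ) < ZG A 𝒰 ρ univ := by exact_mod_cast hZ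
  nlinarith

end
end EG

namespace EG
open Finset
set_option linter.unusedSectionVars false

section
variable {W : Type} [Fintype W] [DecidableEq W]

lemma mk_mem_edgesOf {S : Finset W} {x y : W} : s(x, y) ∈ edgesOf S ↔ x ∈ S ∧ y ∈ S ∧ x ≠ y := by
  simp [edgesOf, and_assoc]

lemma edgesOf_inter (S T : Finset W) : edgesOf S ∩ edgesOf T = edgesOf (S ∩ T) := by
  ext e
  induction e using Sym2.ind with
  | _ x y =>
    simp only [mem_inter, mk_mem_edgesOf]
    tauto

lemma edgesOf_mono {S T : Finset W} (h : S ⊆ T) : edgesOf S ⊆ edgesOf T := by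
  intro e
  induction e using Sym2.ind with
  | _ x y =>
    simp only [mk_mem_edgesOf]
    exact fun ⟨h1, h2, h3⟩ => ⟨h h1, h h2, h3⟩

lemma card_edgesOf (S : Finset W) : (edgesOf S).card = S.card.choose 2 := by
  rw [← Sym2.card_image_offDiag]
  congr 1
  ext e
  induction e using Sym2.ind with
  | _ x y =>
    simp only [mk_mem_edgesOf, mem_image, mem_offDiag, Prod.exists, Function.uncurry_apply_pair, Sym2.eq_iff]
    constructor
    · rintro ⟨h1, h2, h3⟩
      exact ⟨x, y, ⟨h1, h2, h3⟩, Or.inl ⟨rfl, rfl⟩⟩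
    · rintro ⟨a, b, ⟨h1, h2, h3⟩, h | h⟩
      · obtain ⟨rfl, rfl⟩ := h
        exact ⟨h1, h2, h3⟩
      · obtain ⟨rfl, rfl⟩ := h
        exact ⟨h2, h1, h3.symm⟩

lemma two_le_of_edge {S : Finset W} {x : Sym2 W} (hx : x ∈ edgesOf S) : 2 ≤ S.card := by
  have h : 0 < (edgesOf S).card := card_pos.2 ⟨x, hx⟩
  rw [card_edgesOf] at h
  by_contra hc
  rw [Nat.choose_eq_zero_of_lt (by omega)] at h
  omega

lemma three_le_of_edges {S : Finset W} {x y : Sym2 W} (hx : x ∈ edgesOf S) (hy : y ∈ edgesOf S)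
    (hxy : x ≠ y) : 3 ≤ S.card := by
  have h : 1 < (edgesOf S).card := one_lt_card.2 ⟨x, hx, y, hy, hxy⟩
  rw [card_edgesOf] at h
  by_contra hc
  have := Nat.choose_le_choose 2 (show S.card ≤ 2 by omega)
  simp at this
  omega

variable {α : Type} [DecidableEq α]

lemma rk_submod {E : Type} [DecidableEq E] (a : E → α) (F G : Finset E) :
    rk a F + rk a G ≤ rk a (F ∪ G) + rk a (F ∩ G) := by
  have h1 := rk_add a F
  have h2 := rk_add a G
  have h3 := rk_add a (F ∪ G)
  have h4 := rk_add a (F ∩ G)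
  have h5 := card_union_add_card_inter F G
  have h6 := card_union_add_card_inter (F.image a) (G.image a)
  have h7 := card_le_card (image_inter_subset a F G)
  rw [← image_union] at h6
  omega

lemma rk_le_of_card {E : Type} [DecidableEq E] (a : E → α) {F : Finset E} {k : ℕ}
    (h : F.card ≤ k + 1) : rk a F ≤ k := by
  have h1 := rk_add a F
  rcases F.eq_empty_or_nonempty with rfl | hne
  · simp at h1; omega
  · have : 0 < (F.image a).card := card_pos.2 (hne.image a)
    omega

/-- no set of at most `4(P+2)` vertices has too large rank defect; `p = P + 2` -/
def GoodV (a : Sym2 W → α) (P d : ℕ) : Prop :=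
  ∀ U : Finset W, 3 ≤ U.card → U.card ≤ 4 * (P + 2) → rk a (edgesOf U) * P + 2 * d ≤ d * U.card

/-- minimal tight sets -/
def Conf (a : Sym2 W → α) (P d : ℕ) (T : Finset W) : Prop :=
  3 ≤ T.card ∧ T.card ≤ P + 2 ∧ rk a (edgesOf T) * P + 2 * d = d * T.card ∧
    ∀ T' ⊂ T, 3 ≤ T'.card → rk a (edgesOf T') * P + 2 * d < d * T'.card

lemma exists_conf {a : Sym2 W → α} {P d : ℕ} (hg : GoodV a P d) (S : Finset W)
    (hS : 3 ≤ S.card) (hS2 : S.card ≤ P + 2) (h : rk a (edgesOf S) * P + 2 * d = d * S.card) :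
    ∃ T ⊆ S, Conf a P d T := by
  induction S using Finset.strongInduction with
  | H S ih =>
    by_cases hm : ∀ T' ⊂ S, 3 ≤ T'.card → rk a (edgesOf T') * P + 2 * d < d * T'.card
    · exact ⟨S, subset_rfl, hS, hS2, h, hm⟩
    · push Not at hm
      obtain ⟨T', h1, h2, h3⟩ := hm
      have hc := card_le_card h1.1
      obtain ⟨T, hT, hT2⟩ := ih T' h1 h2 (by omega) (le_antisymm (hg T' h2 (by omega)) h3)
      exact ⟨T, hT.trans h1.1, hT2⟩

lemma conf_inter {a : Sym2 W → α} {P d : ℕ} (hg : GoodV a P d) {T T' : Finset W}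
    (h : Conf a P d T) (h' : Conf a P d T') (hne : T ≠ T') : (T ∩ T').card ≤ 2 := by
  by_contra hc
  have hi : rk a (edgesOf (T ∩ T')) * P + 2 * d < d * (T ∩ T').card := by
    by_cases h1 : T ∩ T' = T
    · apply h'.2.2.2 _ _ (by omega)
      refine ⟨inter_subset_right, fun h2 => hne ?_⟩
      exact subset_antisymm (inter_eq_left.1 h1) (h2.trans inter_subset_left)
    · apply h.2.2.2 _ _ (by omega)
      exact ⟨inter_subset_left, fun h2 => h1 (subset_antisymm inter_subset_left h2)⟩
  have hu := card_union_add_card_inter T T'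
  have hsu : T ⊆ T ∪ T' := subset_union_left
  have hle := card_le_card hsu
  obtain ⟨c1, c2, c3, -⟩ := h
  obtain ⟨c1', c2', c3', -⟩ := h'
  have hU := hg (T ∪ T') (by omega) (by omega)
  have hs := rk_submod a (edgesOf T) (edgesOf T')
  rw [edgesOf_inter] at hs
  have hm := rk_mono a (union_subset (edgesOf_mono (subset_union_left (s₁ := T) (s₂ := T')))
    (edgesOf_mono (subset_union_right (s₁ := T) (s₂ := T'))))
  have h1 : (rk a (edgesOf T) + rk a (edgesOf T')) * P ≤
    (rk a (edgesOf (T ∪ T')) + rk a (edgesOf (T ∩ T'))) * P := Nat.mul_le_mul_right _ (by omega)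
  have h2 : d * ((T ∪ T').card + (T ∩ T').card) = d * (T.card + T'.card) := by rw [hu]
  rw [add_mul, add_mul] at h1
  rw [mul_add, mul_add] at h2
  omega

lemma conf_edges {a : Sym2 W → α} {P d : ℕ} (hg : GoodV a P d) {T T' : Finset W}
    (h : Conf a P d T) (h' : Conf a P d T') (hne : T ≠ T') :
    (edgesOf T ∩ edgesOf T').card ≤ 1 := by
  rw [edgesOf_inter, card_edgesOf]
  have := Nat.choose_le_choose 2 (conf_inter hg h h' hne)
  simpa using this

lemma conf_lin {a : Sym2 W → α} {P d : ℕ} (hg : GoodV a P d) {T T' : Finset W}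
    (h : Conf a P d T) (h' : Conf a P d T') {x y : Sym2 W} (hxy : x ≠ y)
    (h1 : x ∈ edgesOf T) (h2 : y ∈ edgesOf T) (h3 : x ∈ edgesOf T') (h4 : y ∈ edgesOf T') :
    T = T' := by
  by_contra hne
  have := conf_edges hg h h' hne
  exact hxy (card_le_one.1 this x (mem_inter.2 ⟨h1, h3⟩) y (mem_inter.2 ⟨h2, h4⟩))

lemma card_union3 {E : Type} [DecidableEq E] {F1 F2 F3 : Finset E} (h13 : (F1 ∩ F3).card ≤ 1)
    (h23 : (F2 ∩ F3).card ≤ 1) : ((F1 ∪ F2) ∩ F3).card ≤ 2 := by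
  rw [union_inter_distrib_right]
  exact (card_union_le _ _).trans (by omega)

lemma conf_tri {a : Sym2 W → α} {P d : ℕ} (hg : GoodV a P d) (hd : 3 * P < d) {T1 T2 T3 : Finset W}
    (h1 : Conf a P d T1) (h2 : Conf a P d T2) (h3 : Conf a P d T3)
    (h12 : T1 ≠ T2) (h23 : T2 ≠ T3) (h13 : T1 ≠ T3) {x y z : Sym2 W} (hyz : y ≠ z)
    (hx1 : x ∈ edgesOf T1) (hx2 : x ∈ edgesOf T2) (hy2 : y ∈ edgesOf T2) (hy3 : y ∈ edgesOf T3)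
    (hz3 : z ∈ edgesOf T3) (hz1 : z ∈ edgesOf T1) : False := by
  have e12 := rk_le_of_card a (k := 0) (conf_edges hg h1 h2 h12)
  have e3 := rk_le_of_card a (k := 1) (card_union3 (conf_edges hg h1 h3 h13) (conf_edges hg h2 h3 h23))
  have s12 := rk_submod a (edgesOf T1) (edgesOf T2)
  have s3 := rk_submod a (edgesOf T1 ∪ edgesOf T2) (edgesOf T3)
  have hm := rk_mono a (union_subset (union_subset
    (edgesOf_mono ((subset_union_left (s₁ := T1) (s₂ := T2)).trans (subset_union_left (s₂ := T3))))
    (edgesOf_mono ((subset_union_right (s₁ := T1) (s₂ := T2)).trans (subset_union_left (s₂ := T3)))))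
    (edgesOf_mono (subset_union_right (s₁ := T1 ∪ T2) (s₂ := T3))))
  have u12 := card_union_add_card_inter T1 T2
  have u3 := card_union_add_card_inter (T1 ∪ T2) T3
  have i12 : 2 ≤ (T1 ∩ T2).card := two_le_of_edge (x := x) (by
    rw [← edgesOf_inter]; exact mem_inter.2 ⟨hx1, hx2⟩)
  have i3 : 3 ≤ ((T1 ∪ T2) ∩ T3).card := three_le_of_edges (x := y) (y := z) (by
    rw [← edgesOf_inter]; exact mem_inter.2 ⟨edgesOf_mono subset_union_right hy2, hy3⟩) (by
    rw [← edgesOf_inter]; exact mem_inter.2 ⟨edgesOf_mono subset_union_left hz1, hz3⟩) hyz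
  have hle := card_le_card (subset_union_right (s₁ := T1 ∪ T2) (s₂ := T3))
  obtain ⟨c1, c2, c3, -⟩ := h1
  obtain ⟨c1', c2', c3', -⟩ := h2
  obtain ⟨c1'', c2'', c3'', -⟩ := h3
  have hU := hg (T1 ∪ T2 ∪ T3) (by omega) (by omega)
  have m1 : (rk a (edgesOf T1) + rk a (edgesOf T2) + rk a (edgesOf T3)) * P ≤
    (rk a (edgesOf (T1 ∪ T2 ∪ T3)) + 1) * P := Nat.mul_le_mul_right _ (by omega)
  have m2 : d * ((T1 ∪ T2 ∪ T3).card + 5) ≤ d * (T1.card + T2.card + T3.card) :=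
    Nat.mul_le_mul_left _ (by omega)
  simp only [add_mul, mul_add] at m1 m2
  omega

lemma conf_quad {a : Sym2 W → α} {P d : ℕ} (hg : GoodV a P d) (hd : 3 * P < d)
    {T1 T2 T3 T4 : Finset W}
    (h1 : Conf a P d T1) (h2 : Conf a P d T2) (h3 : Conf a P d T3) (h4 : Conf a P d T4)
    (h12 : T1 ≠ T2) (h13 : T1 ≠ T3) (h14 : T1 ≠ T4) (h23 : T2 ≠ T3) (h24 : T2 ≠ T4) (h34 : T3 ≠ T4)
    {x y z w : Sym2 W} (hzw : z ≠ w)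
    (hx1 : x ∈ edgesOf T1) (hx2 : x ∈ edgesOf T2) (hy2 : y ∈ edgesOf T2) (hy3 : y ∈ edgesOf T3)
    (hz3 : z ∈ edgesOf T3) (hz4 : z ∈ edgesOf T4) (hw4 : w ∈ edgesOf T4) (hw1 : w ∈ edgesOf T1) :
    False := by
  have e12 := rk_le_of_card a (k := 0) (conf_edges hg h1 h2 h12)
  have e3 := rk_le_of_card a (k := 1) (card_union3 (conf_edges hg h1 h3 h13) (conf_edges hg h2 h3 h23))
  have e4 : rk a ((edgesOf T1 ∪ edgesOf T2 ∪ edgesOf T3) ∩ edgesOf T4) ≤ 2 := by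
    apply rk_le_of_card
    rw [union_inter_distrib_right]
    have := card_union3 (conf_edges hg h1 h4 h14) (conf_edges hg h2 h4 h24)
    have := conf_edges hg h3 h4 h34
    exact (card_union_le _ _).trans (by omega)
  have s12 := rk_submod a (edgesOf T1) (edgesOf T2)
  have s3 := rk_submod a (edgesOf T1 ∪ edgesOf T2) (edgesOf T3)
  have s4 := rk_submod a (edgesOf T1 ∪ edgesOf T2 ∪ edgesOf T3) (edgesOf T4)
  have q1 : T1 ⊆ T1 ∪ T2 ∪ T3 := subset_union_left.trans subset_union_left
  have q2 : T2 ⊆ T1 ∪ T2 ∪ T3 := subset_union_right.trans subset_union_left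
  have q3 : T3 ⊆ T1 ∪ T2 ∪ T3 := subset_union_right
  have q : T1 ∪ T2 ∪ T3 ⊆ T1 ∪ T2 ∪ T3 ∪ T4 := subset_union_left
  have q4 : T4 ⊆ T1 ∪ T2 ∪ T3 ∪ T4 := subset_union_right
  have hm := rk_mono a (union_subset (union_subset (union_subset
    (edgesOf_mono (q1.trans q)) (edgesOf_mono (q2.trans q))) (edgesOf_mono (q3.trans q)))
    (edgesOf_mono q4))
  have u12 := card_union_add_card_inter T1 T2
  have u3 := card_union_add_card_inter (T1 ∪ T2) T3
  have u4 := card_union_add_card_inter (T1 ∪ T2 ∪ T3) T4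
  have i12 : 2 ≤ (T1 ∩ T2).card := two_le_of_edge (x := x) (by
    rw [← edgesOf_inter]; exact mem_inter.2 ⟨hx1, hx2⟩)
  have i3 : 2 ≤ ((T1 ∪ T2) ∩ T3).card := two_le_of_edge (x := y) (by
    rw [← edgesOf_inter]; exact mem_inter.2 ⟨edgesOf_mono subset_union_right hy2, hy3⟩)
  have i4 : 3 ≤ ((T1 ∪ T2 ∪ T3) ∩ T4).card := three_le_of_edges (x := z) (y := w) (by
    rw [← edgesOf_inter]; exact mem_inter.2 ⟨edgesOf_mono q3 hz3, hz4⟩) (by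
    rw [← edgesOf_inter]; exact mem_inter.2 ⟨edgesOf_mono q1 hw1, hw4⟩) hzw
  have hle := card_le_card q4
  obtain ⟨c1, c2, c3, -⟩ := h1
  obtain ⟨c1', c2', c3', -⟩ := h2
  obtain ⟨c1'', c2'', c3'', -⟩ := h3
  obtain ⟨b1, b2, b3, -⟩ := h4
  have hU := hg (T1 ∪ T2 ∪ T3 ∪ T4) (by omega) (by omega)
  have m1 : (rk a (edgesOf T1) + rk a (edgesOf T2) + rk a (edgesOf T3) + rk a (edgesOf T4)) * P ≤
    (rk a (edgesOf (T1 ∪ T2 ∪ T3 ∪ T4)) + 3) * P := Nat.mul_le_mul_right _ (by omega)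
  have m2 : d * ((T1 ∪ T2 ∪ T3 ∪ T4).card + 7) ≤ d * (T1.card + T2.card + T3.card + T4.card) :=
    Nat.mul_le_mul_left _ (by omega)
  simp only [add_mul, mul_add] at m1 m2
  omega

end
end EG

namespace EG
open Finset
set_option linter.unusedSectionVars false

section
variable {E α : Type} [Fintype E] [DecidableEq E] [DecidableEq α]

/-- elements of `F` lying in nontrivial color classes -/
def nt (a : E → α) (F : Finset E) : Finset E := F.filter (fun x => ∃ y ∈ F, y ≠ x ∧ a y = a x)

lemma mem_nt {a : E → α} {F : Finset E} {x : E} :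
    x ∈ nt a F ↔ x ∈ F ∧ ∃ y ∈ F, y ≠ x ∧ a y = a x := by simp [nt]

lemma nt_partner {a : E → α} {F : Finset E} {x : E} (hx : x ∈ nt a F) :
    ∃ y ∈ nt a F, y ≠ x ∧ a y = a x := by
  obtain ⟨h1, y, h2, h3, h4⟩ := mem_nt.1 hx
  exact ⟨y, mem_nt.2 ⟨h2, x, h1, h3.symm, h4.symm⟩, h3, h4⟩

lemma rk_nt (a : E → α) (F : Finset E) : rk a F ≤ rk a (nt a F) := by
  have h1 := rk_add a F
  have h2 := rk_add a (nt a F)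
  have hs : nt a F ⊆ F := filter_subset _ _
  have h3 := card_sdiff_add_card_eq_card hs
  have hinj : Set.InjOn a (F \ nt a F : Finset E) := by
    intro x hx y hy hxy
    rw [mem_coe, mem_sdiff] at hx hy
    by_contra hne
    exact hx.2 (mem_nt.2 ⟨hx.1, y, hy.1, Ne.symm hne, hxy.symm⟩)
  have hdis : Disjoint ((F \ nt a F).image a) ((nt a F).image a) := by
    rw [disjoint_left]
    intro c hc hc'
    obtain ⟨x, hx, rfl⟩ := mem_image.1 hc
    obtain ⟨y, hy, hyx⟩ := mem_image.1 hc'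
    rw [mem_sdiff] at hx
    apply hx.2
    refine mem_nt.2 ⟨hx.1, y, hs hy, ?_, hyx⟩
    rintro rfl
    exact hx.2 hy
  have h4 : (F \ nt a F).card + ((nt a F).image a).card ≤ (F.image a).card := by
    rw [← card_image_of_injOn hinj, ← card_union_of_disjoint hdis, ← image_union,
      sdiff_union_of_subset hs]
  omega

variable {B : ℕ}

/-- colorings of `nt a F` refining to no new classes -/
def Fam (a : E → α) (hB : 0 < B) (F : Finset E) : Finset (E → Fin B) :=
  univ.filter (fun f => (∀ x, x ∉ nt a F → f x = ⟨0, hB⟩) ∧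
    ∀ x ∈ nt a F, ∀ y ∈ nt a F, a x = a y → f x = f y)

lemma mem_Fam {a : E → α} {hB : 0 < B} {F : Finset E} {f : E → Fin B} :
    f ∈ Fam a hB F ↔ (∀ x, x ∉ nt a F → f x = ⟨0, hB⟩) ∧
    ∀ x ∈ nt a F, ∀ y ∈ nt a F, a x = a y → f x = f y := by simp [Fam]

lemma Fam_count (a : E → α) (hB : 0 < B) (F : Finset E) {v : E} (hv : v ∈ nt a F) (c : Fin B) :
    ((Fam a hB F).filter (fun f => f v = c)).card ≤ B ^ (((nt a F).image a).card - 1) := by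
  classical
  have hav : a v ∈ (nt a F).image a := mem_image_of_mem a hv
  have hrep : ∀ t : ((nt a F).image a).erase (a v), ∃ x ∈ nt a F, a x = t := by
    rintro ⟨t, ht⟩
    exact mem_image.1 (mem_erase.1 ht).2
  choose rep hrep1 hrep2 using hrep
  have : B ^ (((nt a F).image a).card - 1) =
      (univ : Finset ((((nt a F).image a).erase (a v)) → Fin B)).card := by
    simp [card_erase_of_mem hav]
  rw [this]
  apply card_le_card_of_injOn (fun f t => f (rep t)) (fun _ _ => mem_coe.2 (mem_univ _))
  intro f hf g hg hfg
  simp only [coe_filter, Set.mem_ofPred_eq, mem_Fam] at hf hg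
  funext x
  by_cases hx : x ∈ nt a F
  · by_cases hxv : a x = a v
    · rw [hf.1.2 x hx v hv hxv, hg.1.2 x hx v hv hxv, hf.2, hg.2]
    · have ht : a x ∈ ((nt a F).image a).erase (a v) := mem_erase.2 ⟨hxv, mem_image_of_mem a hx⟩
      have h1 := congrFun hfg ⟨a x, ht⟩
      simp only at h1
      rw [hf.1.2 x hx _ (hrep1 ⟨a x, ht⟩) (hrep2 ⟨a x, ht⟩).symm,
        hg.1.2 x hx _ (hrep1 ⟨a x, ht⟩) (hrep2 ⟨a x, ht⟩).symm, h1]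
  · rw [hf.1.1 x hx, hg.1.1 x hx]

lemma Fam_weight (a : E → α) (hB : 0 < B) (F : Finset E) {v : E} (hv : v ∈ nt a F) (c : Fin B) :
    (((Fam a hB F).filter (fun f => f v = c)).card : ℝ) * (1 / (B : ℝ)) ^ ((nt a F).card - 1)
      ≤ (1 / (B:ℝ)) ^ (rk a F) := by
  have hB' : (0:ℝ) < B := by exact_mod_cast hB
  have hB1 : (1:ℝ) ≤ B := by exact_mod_cast hB
  have h1 := rk_add a (nt a F)
  have hk : 0 < ((nt a F).image a).card := card_pos.2 ⟨_, mem_image_of_mem a hv⟩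
  have e : (nt a F).card - 1 = rk a (nt a F) + (((nt a F).image a).card - 1) := by omega
  have h2 : (((Fam a hB F).filter (fun f => f v = c)).card : ℝ) ≤
    (B:ℝ) ^ (((nt a F).image a).card - 1) := by exact_mod_cast Fam_count a hB F hv c
  calc _ ≤ (B:ℝ) ^ (((nt a F).image a).card - 1) * (1 / (B : ℝ)) ^ ((nt a F).card - 1) :=
        mul_le_mul_of_nonneg_right h2 (by positivity)
    _ = (1 / (B:ℝ)) ^ (rk a (nt a F)) := by
        rw [e, pow_add, mul_left_comm, ← mul_pow, mul_one_div_cancel hB'.ne', one_pow, mul_one]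
    _ ≤ _ := by
        apply pow_le_pow_of_le_one (by positivity) _ (rk_nt a F)
        rw [div_le_one hB']; exact hB1

end

section
variable {W : Type} [Fintype W] [DecidableEq W] {α : Type} [DecidableEq α]

open Classical in
theorem phaseB_graph (a : Sym2 W → α) (P d : ℕ) (hg : GoodV a P d) (hd : 3 * P < d)
    (B : ℕ) (hB : 0 < B) (m r : ℕ → ℕ) (hr : ∀ T, Conf a P d T → rk a (edgesOf T) = r T.card)
    (hdeg : ∀ v j, ∀ TT : Finset (Finset W),
      (∀ T ∈ TT, Conf a P d T ∧ T.card = j ∧ v ∈ edgesOf T) → TT.card ≤ m j)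
    (σ : ℕ) (lam ζ : ℝ) (hζ : 1 ≤ ζ)
    (hlam : ∑ j ∈ Icc 3 (P + 2), (m j : ℝ) * (1 / (B:ℝ)) ^ (r j) ≤ lam)
    (hσB : 16 * σ * ζ ≤ B)
    (h2 : 2 * (Fintype.card (Sym2 W) : ℝ) ≤ Real.exp (σ / 2))
    (h1 : 2 * (Fintype.card (Sym2 W) : ℝ) * B * Real.exp (4 ^ ((P + 2) ^ 2 + 1) * σ * lam) ≤ ζ ^ σ) :
    ∃ b : Sym2 W → Fin B, ∀ T, Conf a P d T →
      ∃ x ∈ edgesOf T, ∃ y ∈ edgesOf T, a x = a y ∧ b x ≠ b y := by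
  have hsub : ∀ T, nt a (edgesOf T) ⊆ edgesOf T := fun T => filter_subset _ _
  let S : Sys (Sym2 W) {T : Finset W // Conf a P d T} B :=
    { e := fun T => nt a (edgesOf T.1)
      F := fun T => Fam a hB (edgesOf T.1)
      two := by
        rintro ⟨T, hT⟩
        have h3 := rk_nt a (edgesOf T)
        have h4 : 0 < rk a (edgesOf T) := by
          obtain ⟨c1, c2, c3, -⟩ := hT
          by_contra h0
          have : rk a (edgesOf T) = 0 := by omega
          rw [this] at c3
          nlinarith
        have h5 := rk_add a (nt a (edgesOf T))
        by_contra hc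
        simp only [not_le] at hc
        have := rk_le_of_card a (k := 0) (show (nt a (edgesOf T)).card ≤ 0 + 1 by omega)
        omega
      lin := by
        rintro ⟨T, hT⟩ ⟨T', hT'⟩ u v huv h1 h2 h3 h4
        have := conf_lin hg hT hT' huv (hsub _ h1) (hsub _ h2) (hsub _ h3) (hsub _ h4)
        exact Subtype.ext this
      tri := by
        rintro ⟨T1, h1⟩ ⟨T2, h2⟩ ⟨T3, h3⟩ x y z h12 h23 h13 hxy hyz hxz q1 q2 q3 q4 q5 q6
        exact conf_tri hg hd h1 h2 h3 (fun h => h12 (Subtype.ext h)) (fun h => h23 (Subtype.ext h))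
          (fun h => h13 (Subtype.ext h)) hyz (hsub _ q1) (hsub _ q2) (hsub _ q3) (hsub _ q4)
          (hsub _ q5) (hsub _ q6)
      quad := by
        rintro ⟨T1, h1⟩ ⟨T2, h2⟩ ⟨T3, h3⟩ ⟨T4, h4⟩ x y z w h12 h13 h14 h23 h24 h34 _ _ _ _ _ hzw
          q1 q2 q3 q4 q5 q6 q7 q8
        exact conf_quad hg hd h1 h2 h3 h4 (fun h => h12 (Subtype.ext h))
          (fun h => h13 (Subtype.ext h)) (fun h => h14 (Subtype.ext h)) (fun h => h23 (Subtype.ext h))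
          (fun h => h24 (Subtype.ext h)) (fun h => h34 (Subtype.ext h)) hzw
          (hsub _ q1) (hsub _ q2) (hsub _ q3) (hsub _ q4)
          (hsub _ q5) (hsub _ q6) (hsub _ q7) (hsub _ q8)
      rig := by
        rintro ⟨T, hT⟩ f hf f' hf' v hv hz
        simp only [mem_Fam] at hf hf'
        obtain ⟨y, hy, hyv, hay⟩ := nt_partner hv
        funext x
        by_cases hx : x ∈ nt a (edgesOf T)
        · by_cases hxv : x = v
          · subst hxv
            rw [← hf.2 y hy x hx hay, ← hf'.2 y hy x hx hay]
            exact hz y hy hyv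
          · exact hz x hx hxv
        · rw [hf.1 x hx, hf'.1 x hx] }
  obtain ⟨b, hb⟩ := phaseB S ((P + 2) ^ 2) (by
      rintro ⟨T, hT⟩
      refine (card_le_card (hsub T)).trans ?_
      rw [card_edgesOf]
      exact (Nat.choose_le_pow _ _).trans (Nat.pow_le_pow_left hT.2.1 2)) hB σ lam ζ hζ (by
      intro v c
      refine le_trans ?_ hlam
      have l1 : ∑ i ∈ univ.filter (fun i => v ∈ S.e i),
          (((S.F i).filter (fun f => f v = c)).card : ℝ) * (1 / (B : ℝ)) ^ ((S.e i).card - 1)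
          ≤ ∑ i ∈ univ.filter (fun i => v ∈ S.e i), (1 / (B:ℝ)) ^ (r i.1.card) := by
        refine sum_le_sum fun i hi => ?_
        rw [mem_filter] at hi
        rw [← hr i.1 i.2]
        exact Fam_weight a hB (edgesOf i.1) hi.2 c
      refine l1.trans ?_
      have hmaps : ∀ i ∈ univ.filter (fun i => v ∈ S.e i), i.1.card ∈ Icc 3 (P + 2) :=
        fun i _ => mem_Icc.2 ⟨i.2.1, i.2.2.1⟩
      rw [← sum_fiberwise_of_maps_to hmaps]
      refine sum_le_sum fun j _ => ?_
      have l2 : ∑ i ∈ (univ.filter (fun i => v ∈ S.e i)).filter (fun i => i.1.card = j),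
          (1 / (B:ℝ)) ^ (r i.1.card) =
          (((univ.filter (fun i => v ∈ S.e i)).filter (fun i => i.1.card = j)).card : ℝ) *
            (1 / (B:ℝ)) ^ (r j) := by
        rw [← nsmul_eq_mul, ← sum_const]
        refine sum_congr rfl fun i hi => ?_
        rw [(mem_filter.1 hi).2]
      rw [l2]
      apply mul_le_mul_of_nonneg_right _ (by positivity)
      have l3 := hdeg v j (((univ.filter (fun i => v ∈ S.e i)).filter
        (fun i => i.1.card = j)).image Subtype.val) (by
          intro T hT
          obtain ⟨i, hi, rfl⟩ := mem_image.1 hT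
          simp only [mem_filter, mem_univ, true_and] at hi
          exact ⟨i.2, hi.2, hsub _ hi.1⟩)
      rw [card_image_of_injective _ Subtype.val_injective] at l3
      exact_mod_cast l3) hσB h2 h1
  refine ⟨b, fun T hT => ?_⟩
  by_contra hcon
  push Not at hcon
  set f : Sym2 W → Fin B := fun x => if x ∈ nt a (edgesOf T) then b x else ⟨0, hB⟩ with hf
  obtain ⟨z, hz, hne⟩ := hb ⟨T, hT⟩ f (by
    change f ∈ Fam a hB (edgesOf T)
    rw [mem_Fam]
    refine ⟨fun x hx => by simp [hf, hx], fun x hx y hy hxy => ?_⟩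
    simp only [hf, hx, hy, if_true]
    exact hcon x (hsub _ hx) y (hsub _ hy) hxy)
  have hz' : z ∈ nt a (edgesOf T) := hz
  apply hne
  simp [hf, hz']

end
end EG

namespace EG
open Finset
set_option linter.unusedSectionVars false

section
variable {W : Type} [Fintype W] [DecidableEq W]

/-- Vertices covered by a set of edges. -/
def vs (F : Finset (Sym2 W)) : Finset W := univ.filter (fun v => ∃ e ∈ F, v ∈ e)

lemma vs_edgesOf {U : Finset W} (h : 2 ≤ U.card) : vs (edgesOf U) = U := by
  ext v
  simp only [vs, mem_filter, mem_univ, true_and]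
  constructor
  · rintro ⟨e, he, hv⟩
    induction e using Sym2.ind with
    | _ x y =>
      rw [mk_mem_edgesOf] at he
      rcases Sym2.mem_iff.1 hv with rfl | rfl
      · exact he.1
      · exact he.2.1
  · intro hv
    obtain ⟨w, hw, hne⟩ := exists_mem_ne (by omega : 1 < U.card) v
    exact ⟨s(v, w), mk_mem_edgesOf.2 ⟨hv, hw, hne.symm⟩, Sym2.mem_mk_left _ _⟩

lemma edgesOf_inj {U V : Finset W} (h : 2 ≤ U.card) (h' : 2 ≤ V.card)
    (he : edgesOf U = edgesOf V) : U = V := by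
  rw [← vs_edgesOf h, he, vs_edgesOf h']

lemma card_cont (g : Sym2 W) (j : ℕ) :
    (univ.filter (fun U : Finset W => U.card = j ∧ g ∈ edgesOf U)).card ≤
      (Fintype.card W) ^ (j - 2) := by
  induction g using Sym2.ind with
  | _ x y =>
    refine le_trans ?_ (Nat.choose_le_pow (Fintype.card W) (j - 2))
    rw [← card_univ, ← card_powersetCard]
    apply card_le_card_of_injOn (fun U => U \ {x, y})
    · intro U hU
      simp only [coe_filter, mem_univ, true_and, Set.mem_ofPred_eq, mk_mem_edgesOf] at hU
      simp only [mem_coe, mem_powersetCard, subset_univ, true_and]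
      rw [card_sdiff_of_subset, card_pair hU.2.2.2, hU.1]
      intro z hz
      simp only [mem_insert, mem_singleton] at hz
      rcases hz with rfl | rfl
      · exact hU.2.1
      · exact hU.2.2.1
    · intro U hU V hV hUV
      simp only [coe_filter, mem_univ, true_and, Set.mem_ofPred_eq, mk_mem_edgesOf] at hU hV
      have hU' : {x, y} ⊆ U := by
        intro z hz
        simp only [mem_insert, mem_singleton] at hz
        rcases hz with rfl | rfl
        · exact hU.2.1
        · exact hU.2.2.1
      have hV' : {x, y} ⊆ V := by
        intro z hz
        simp only [mem_insert, mem_singleton] at hz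
        rcases hz with rfl | rfl
        · exact hV.2.1
        · exact hV.2.2.1
      rw [← sdiff_union_of_subset hU', ← sdiff_union_of_subset hV']
      simp only at hUV
      rw [hUV]

lemma card_sym2_le : Fintype.card (Sym2 W) ≤ Fintype.card W ^ 2 := by
  have := Fintype.card_le_of_surjective (fun x : W × W => s(x.1, x.2)) (by
    intro e
    induction e using Sym2.ind with
    | _ x y => exact ⟨(x, y), rfl⟩)
  rwa [Fintype.card_prod, ← sq] at this

lemma card_edges_le {U : Finset W} {k : ℕ} (h : U.card ≤ k) : (edgesOf U).card ≤ k ^ 2 := by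
  rw [card_edgesOf]
  exact (Nat.choose_le_pow _ _).trans (Nat.pow_le_pow_left h 2)

lemma sum_H1 (P d A : ℕ) (hA : 0 < A) (g : Sym2 W)
    (H : ∑ j ∈ Icc 3 (4 * (P + 2)), ((Fintype.card W : ℝ)) ^ (j - 2) *
      (((4 * (4 * (P + 2)) ^ 2 : ℕ) : ℝ) ^ ((4 * (P + 2)) ^ 2) *
        (1 / (A:ℝ)) ^ (d * (j - 2) / P + 1)) ≤ 1 / 2) :
    ∑ U ∈ ((univ.filter (fun X : Finset W => 3 ≤ X.card ∧ X.card ≤ 4 * (P + 2))).image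
      edgesOf).filter (fun U => g ∈ U),
      ((4 * U.card : ℕ) : ℝ) ^ U.card * (1 / (A:ℝ)) ^ (d * ((vs U).card - 2) / P + 1) ≤ 1 / 2 := by
  rw [filter_image, filter_filter, sum_image]
  · refine le_trans ?_ H
    rw [← sum_fiberwise_of_maps_to (g := Finset.card) (t := Icc 3 (4 * (P + 2)))]
    · apply sum_le_sum
      intro j hj
      rw [mem_Icc] at hj
      have hA' : (0:ℝ) < A := by exact_mod_cast hA
      have key : ∀ X ∈ (univ.filter (fun X : Finset W => (3 ≤ X.card ∧ X.card ≤ 4 * (P + 2)) ∧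
          g ∈ edgesOf X)).filter (fun X => X.card = j),
          ((4 * (edgesOf X).card : ℕ) : ℝ) ^ (edgesOf X).card *
            (1 / (A:ℝ)) ^ (d * ((vs (edgesOf X)).card - 2) / P + 1) ≤
          ((4 * (4 * (P + 2)) ^ 2 : ℕ) : ℝ) ^ ((4 * (P + 2)) ^ 2) *
            (1 / (A:ℝ)) ^ (d * (j - 2) / P + 1) := by
        intro X hX
        simp only [mem_filter, mem_univ, true_and] at hX
        rw [vs_edgesOf (by omega), hX.2]
        have h1 := pow_self_mono (c := 4) (by norm_num) (card_edges_le hX.1.1.2)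
        apply mul_le_mul_of_nonneg_right _ (by positivity)
        exact_mod_cast h1
      refine (sum_le_card_nsmul _ _ _ key).trans ?_
      rw [nsmul_eq_mul]
      apply mul_le_mul_of_nonneg_right _ (by positivity)
      have h2 := card_cont g j
      have h3 : ((univ.filter (fun X : Finset W => (3 ≤ X.card ∧ X.card ≤ 4 * (P + 2)) ∧
          g ∈ edgesOf X)).filter (fun X => X.card = j)).card ≤ (Fintype.card W) ^ (j - 2) := by
        refine le_trans (card_le_card ?_) h2
        intro X hX
        simp only [mem_filter, mem_univ, true_and] at hX ⊢
        exact ⟨hX.2, hX.1.2⟩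
      exact_mod_cast h3
    · intro X hX
      simp only [mem_filter, mem_univ, true_and] at hX
      rw [mem_Icc]; exact hX.1
  · intro X hX Y hY hXY
    simp only [coe_filter, mem_univ, true_and, Set.mem_ofPred_eq] at hX hY
    exact edgesOf_inj (by omega) (by omega) hXY

end

theorem core (n P d q A B : ℕ) (hP : 1 ≤ P) (hd : 3 * P < d) (hq : q + d = (P + 2).choose 2 + 1)
    (hA : 0 < A) (hB : 0 < B) (m : ℕ → ℕ)
    (H1 : ∑ j ∈ Icc 3 (4 * (P + 2)), (n : ℝ) ^ (j - 2) *
      (((4 * (4 * (P + 2)) ^ 2 : ℕ) : ℝ) ^ ((4 * (P + 2)) ^ 2) *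
        (1 / (A:ℝ)) ^ (d * (j - 2) / P + 1)) ≤ 1 / 2)
    (H2 : (n:ℝ) ^ 2 * ∑ j ∈ Icc 3 (P + 2), (((n ^ (j - 2)).choose (m j) : ℕ) : ℝ) *
      (((4 * (P + 2) ^ 2 : ℕ) : ℝ) ^ ((P + 2) ^ 2) *
        (1 / (A:ℝ)) ^ ((d * (j - 2) + (P - 1)) / P)) ^ (m j) < 1)
    (σ : ℕ) (lam ζ : ℝ) (hζ : 1 ≤ ζ)
    (hlam : ∑ j ∈ Icc 3 (P + 2), (m j : ℝ) * (1 / (B:ℝ)) ^ ((d * (j - 2) + (P - 1)) / P) ≤ lam)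
    (hσB : 16 * σ * ζ ≤ B)
    (h2 : 2 * (n:ℝ) ^ 2 ≤ Real.exp (σ / 2))
    (h1 : 2 * (n:ℝ) ^ 2 * B * Real.exp (4 ^ ((P + 2) ^ 2 + 1) * σ * lam) ≤ ζ ^ σ) :
    genRamsey n (P + 2) q ≤ A * B := by
  classical
  have hA' : (0:ℝ) < A := by exact_mod_cast hA
  have hcardE : ((Fintype.card (Sym2 (Fin n)) : ℕ) : ℝ) ≤ (n:ℝ) ^ 2 := by
    have := card_sym2_le (W := Fin n)
    rw [Fintype.card_fin] at this
    exact_mod_cast this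
  obtain ⟨a, ha1, ha2⟩ := phaseA (E := Sym2 (Fin n)) hA
    ((univ.filter (fun X : Finset (Fin n) => 3 ≤ X.card ∧ X.card ≤ 4 * (P + 2))).image edgesOf)
    (fun F => d * ((vs F).card - 2) / P)
    (fun g => sum_H1 P d A hA g (by rw [Fintype.card_fin]; exact H1))
    (T := Sym2 (Fin n) × {j // j ∈ Icc 3 (P + 2)})
    (fun t => t.1)
    (fun t => (univ.filter (fun U : Finset (Fin n) => U.card = t.2.1 ∧ t.1 ∈ edgesOf U)).image
      edgesOf) ((P + 2) ^ 2)
    (by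
      rintro ⟨g, j, hj⟩ S hS
      simp only [mem_image, mem_filter, mem_univ, true_and] at hS
      obtain ⟨U, ⟨hU1, hU2⟩, rfl⟩ := hS
      rw [mem_Icc] at hj
      exact ⟨hU2, card_edges_le (by omega)⟩)
    (fun t => (d * (t.2.1 - 2) + (P - 1)) / P) (fun t => m t.2.1)
    (by
      refine lt_of_le_of_lt ?_ H2
      rw [Fintype.sum_prod_type]
      have hc : ∀ g : Sym2 (Fin n), ∑ y : {j // j ∈ Icc 3 (P + 2)},
          (((((univ.filter (fun U : Finset (Fin n) => U.card = y.1 ∧ g ∈ edgesOf U)).image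
            edgesOf).card.choose (m y.1) : ℕ)) : ℝ) *
          (((4 * (P + 2) ^ 2 : ℕ) : ℝ) ^ ((P + 2) ^ 2) *
            (1 / (A:ℝ)) ^ ((d * (y.1 - 2) + (P - 1)) / P)) ^ (m y.1) ≤
          ∑ j ∈ Icc 3 (P + 2), (((n ^ (j - 2)).choose (m j) : ℕ) : ℝ) *
            (((4 * (P + 2) ^ 2 : ℕ) : ℝ) ^ ((P + 2) ^ 2) *
            (1 / (A:ℝ)) ^ ((d * (j - 2) + (P - 1)) / P)) ^ (m j) := by
        intro g
        rw [← sum_coe_sort (Icc 3 (P + 2))]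
        apply sum_le_sum
        rintro ⟨j, hj⟩ -
        apply mul_le_mul_of_nonneg_right _ (by positivity)
        have := card_cont g j
        rw [Fintype.card_fin] at this
        have h3 := Nat.choose_le_choose (m j) (card_image_le.trans this :
          ((univ.filter (fun U : Finset (Fin n) => U.card = j ∧ g ∈ edgesOf U)).image
            edgesOf).card ≤ n ^ (j - 2))
        exact_mod_cast h3
      refine (sum_le_card_nsmul _ _ _ (fun g _ => hc g)).trans ?_
      rw [nsmul_eq_mul, card_univ]
      exact mul_le_mul_of_nonneg_right hcardE (sum_nonneg (fun j _ => by positivity)))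
  have hg : GoodV a P d := by
    intro U hU1 hU2
    have h := ha1 (edgesOf U) (mem_image_of_mem _ (by simp [hU1, hU2]))
    rw [vs_edgesOf (by omega)] at h
    have h' := Nat.mul_le_mul_right P h
    have h'' := Nat.div_mul_le_self (d * (U.card - 2)) P
    have h4 : d * U.card = d * (U.card - 2) + 2 * d := by
      obtain ⟨k, hk⟩ : ∃ k, U.card = k + 2 := ⟨U.card - 2, by omega⟩
      rw [hk]; simp; ring
    omega
  have hr : ∀ T, Conf a P d T → rk a (edgesOf T) = (d * (T.card - 2) + (P - 1)) / P := by
    intro T hT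
    obtain ⟨c1, -, c3, -⟩ := hT
    have h4 : d * T.card = d * (T.card - 2) + 2 * d := by
      obtain ⟨k, hk⟩ : ∃ k, T.card = k + 2 := ⟨T.card - 2, by omega⟩
      rw [hk]; simp; ring
    have h5 : d * (T.card - 2) = rk a (edgesOf T) * P := by omega
    rw [h5, mul_comm, Nat.mul_add_div (by omega), Nat.div_eq_of_lt (by omega), add_zero]
  obtain ⟨b, hb⟩ := phaseB_graph a P d hg hd B hB m (fun j => (d * (j - 2) + (P - 1)) / P) hr
    (by
      intro v j TT hTT
      by_contra hlt
      push Not at hlt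
      obtain ⟨T0, hT0⟩ : TT.Nonempty := card_pos.1 (by omega)
      have hj : j ∈ Icc 3 (P + 2) := by
        rw [mem_Icc, ← (hTT T0 hT0).2.1]
        exact ⟨(hTT T0 hT0).1.1, (hTT T0 hT0).1.2.1⟩
      rw [mem_Icc] at hj
      obtain ⟨TT', hsub, hcard⟩ := exists_subset_card_eq hlt.le
      obtain ⟨S, hS, hlt2⟩ := ha2 (v, ⟨j, mem_Icc.2 hj⟩) (TT'.image edgesOf)
        (by
          intro S hS
          obtain ⟨T, hT, rfl⟩ := mem_image.1 hS
          apply mem_image_of_mem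
          simp only [mem_filter, mem_univ, true_and]
          exact (hTT T (hsub hT)).2)
        (by
          rw [card_image_of_injOn, hcard]
          intro X hX Y hY hXY
          have hX' := (hTT X (hsub hX)).2.1
          have hY' := (hTT Y (hsub hY)).2.1
          exact edgesOf_inj (by omega) (by omega) hXY)
        (by
          intro S hS S' hS' hne
          obtain ⟨T, hT, rfl⟩ := mem_image.1 hS
          obtain ⟨T', hT', rfl⟩ := mem_image.1 hS'
          have h3 := conf_edges hg (hTT T (hsub hT)).1 (hTT T' (hsub hT')).1
            (fun h => hne (by rw [h]))
          intro z hz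
          rw [mem_singleton]
          exact card_le_one.1 h3 z hz v
            (mem_inter.2 ⟨(hTT T (hsub hT)).2.2, (hTT T' (hsub hT')).2.2⟩))
      obtain ⟨T, hT, rfl⟩ := mem_image.1 hS
      have h4 := hr T (hTT T (hsub hT)).1
      rw [(hTT T (hsub hT)).2.1] at h4
      simp only at hlt2
      omega)
    σ lam ζ hζ hlam hσB
    (le_trans (by linarith) h2)
    (by
      refine le_trans ?_ h1
      gcongr)
  apply Nat.sInf_le
  refine ⟨fun x => finProdFinEquiv (a x, b x), ?_⟩
  intro S hS
  have him : ((edgesOf S).image (fun x => finProdFinEquiv (a x, b x))).card =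
      ((edgesOf S).image (fun x => (a x, b x))).card := by
    rw [← card_image_of_injective ((edgesOf S).image (fun x => (a x, b x)))
      (finProdFinEquiv (m := A) (n := B)).injective, image_image]
    rfl
  rw [him]
  have hfst : (edgesOf S).image a = ((edgesOf S).image (fun x => (a x, b x))).image Prod.fst := by
    rw [image_image]; rfl
  have hle : ((edgesOf S).image a).card ≤ ((edgesOf S).image (fun x => (a x, b x))).card := by
    rw [hfst]; exact card_image_le
  have hrk := rk_add a (edgesOf S)
  rw [card_edgesOf, hS] at hrk
  have hgS := hg S (by omega) (by omega)
  rw [hS] at hgS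
  have hgS' : rk a (edgesOf S) * P ≤ d * P := by
    have : d * (P + 2) = d * P + 2 * d := by ring
    omega
  have hrd : rk a (edgesOf S) ≤ d := Nat.le_of_mul_le_mul_right hgS' hP
  rcases hrd.lt_or_eq with hlt | heq
  · omega
  · obtain ⟨T, hTS, hT⟩ := exists_conf hg S (by omega) (by omega) (by rw [heq, hS]; ring)
    obtain ⟨x, hx, y, hy, hxy, hbxy⟩ := hb T hT
    have hlt : ((edgesOf S).image a).card < ((edgesOf S).image (fun x => (a x, b x))).card := by
      refine lt_of_le_of_ne hle ?_
      intro h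
      rw [hfst, card_image_iff] at h
      have h5 := h (mem_coe.2 (mem_image_of_mem (fun x => (a x, b x)) (edgesOf_mono hTS hx)))
        (mem_coe.2 (mem_image_of_mem (fun x => (a x, b x)) (edgesOf_mono hTS hy))) hxy
      exact hbxy (congrArg Prod.snd h5)
    omega

end EG

namespace EG
open Finset

lemma ev_exp (c k s b : ℝ) (hc : 0 < c) (hs : 0 < s) (hb : 0 < b) :
    ∀ᶠ n : ℕ in Filter.atTop, c * (n:ℝ) ^ k ≤ Real.exp (b * (n:ℝ) ^ s) := by
  have h1 := isLittleO_rpow_exp_pos_mul_atTop (k / s) hb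
  have h2 := h1.comp_tendsto ((tendsto_rpow_atTop hs).comp tendsto_natCast_atTop_atTop)
  have h3 := h2.bound (show 0 < c⁻¹ by positivity)
  filter_upwards [h3, Filter.eventually_ge_atTop 1] with n hn h1n
  have hn0 : (0:ℝ) ≤ n := by positivity
  simp only [Function.comp, Real.norm_eq_abs, Real.abs_exp] at hn
  rw [← Real.rpow_mul hn0, mul_div_cancel₀ _ hs.ne', abs_of_nonneg (by positivity)] at hn
  rw [inv_mul_eq_div, le_div_iff₀ hc] at hn
  linarith

lemma ev_neg (c s : ℝ) (b : ℝ) (hb : 0 < b) (hs : 0 < s) :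
    ∀ᶠ n : ℕ in Filter.atTop, c * (n:ℝ) ^ (-s) ≤ b := by
  have h1 := ((tendsto_rpow_neg_atTop hs).comp tendsto_natCast_atTop_atTop).const_mul c
  rw [mul_zero] at h1
  filter_upwards [h1.eventually (gt_mem_nhds hb)] with n hn
  exact hn.le

lemma ev_log (s : ℝ) (hs : 0 < s) :
    ∀ᶠ n : ℕ in Filter.atTop, 32 * Real.log n ≤ (n:ℝ) ^ s := by
  have h := ((isLittleO_log_rpow_atTop hs).comp_tendsto tendsto_natCast_atTop_atTop).bound
    (show (0:ℝ) < 1 / 32 by norm_num)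
  filter_upwards [h] with n hn
  simp only [Function.comp, Real.norm_eq_abs] at hn
  rw [abs_of_nonneg (by positivity : (0:ℝ) ≤ (n:ℝ) ^ s)] at hn
  have := le_abs_self (Real.log n)
  linarith

lemma ceil_le_two {x : ℝ} (hx : 1 ≤ x) : (⌈x⌉₊ : ℝ) ≤ 2 * x := by
  have := Nat.ceil_lt_add_one (by linarith : 0 ≤ x)
  linarith

/-- powers of `1/A` -/
lemma inv_pow_le {x A α : ℝ} (hx : 1 ≤ x) (hA : x ^ α ≤ A) (r : ℕ) :
    (1 / A) ^ r ≤ x ^ (-(α * r)) := by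
  have hx0 : 0 < x := by linarith
  have h0 : 0 < x ^ α := by positivity
  rw [Real.rpow_neg hx0.le, Real.rpow_mul hx0.le, Real.rpow_natCast, one_div, inv_pow]
  gcongr

lemma h1_exp {P d j : ℕ} (hP : 1 ≤ P) (hd : 0 < d) (hj3 : 3 ≤ j) (hj : j ≤ 4 * (P + 2)) :
    ((j - 2 : ℕ) : ℝ) - ((P:ℝ) / d - 1 / (22 * (d:ℝ) ^ 2)) * ((d * (j - 2) / P + 1 : ℕ) : ℝ) ≤
      -(1 / (2 * (d:ℝ))) := by
  obtain ⟨i, rfl⟩ : ∃ i, j = i + 2 := ⟨j - 2, by omega⟩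
  simp only [Nat.add_sub_cancel]
  have hd' : (0:ℝ) < d := by exact_mod_cast hd
  set R := d * i / P with hR
  have e1 : d * i + 1 ≤ (R + 1) * P := by
    have := Nat.lt_div_mul_add (a := d * i) hP
    rw [← hR] at this
    nlinarith
  have e2 : R * P ≤ d * i := Nat.div_mul_le_self _ _
  have e3 : R ≤ 10 * d := by
    by_contra hc
    push Not at hc
    have : (10 * d + 1) * P ≤ d * i := (Nat.mul_le_mul_right P hc).trans e2
    nlinarith
  have e1' : (d:ℝ) * i + 1 ≤ ((R:ℝ) + 1) * P := by exact_mod_cast e1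
  have e3' : (R:ℝ) ≤ 10 * d := by exact_mod_cast e3
  have hd1 : (1:ℝ) ≤ d := by exact_mod_cast hd
  have a1 : (i:ℝ) + 1 / d ≤ (P:ℝ) / d * (R + 1) := by
    rw [show (P:ℝ) / d * (R + 1) = ((R + 1) * P) / d by ring, le_div_iff₀ hd']
    have : ((i:ℝ) + 1 / d) * d = d * i + 1 := by field_simp
    linarith
  have a2 : 1 / (22 * (d:ℝ) ^ 2) * (R + 1) ≤ 1 / (2 * d) := by
    rw [one_div_mul_eq_div, div_le_div_iff₀ (by positivity) (by positivity)]
    nlinarith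
  have a3 : 1 / (d:ℝ) = 1 / (2 * d) + 1 / (2 * d) := by field_simp; norm_num
  push_cast
  nlinarith

lemma r_facts {P d j : ℕ} (hP : 1 ≤ P) (hd : 0 < d) (hj3 : 3 ≤ j) (hj : j ≤ P + 2) :
    1 ≤ (d * (j - 2) + (P - 1)) / P ∧ (d * (j - 2) + (P - 1)) / P ≤ d ∧
      d * (j - 2) ≤ (d * (j - 2) + (P - 1)) / P * P := by
  obtain ⟨i, rfl⟩ : ∃ i, j = i + 2 := ⟨j - 2, by omega⟩
  simp only [Nat.add_sub_cancel]
  have h3 : d * i ≤ (d * i + (P - 1)) / P * P := by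
    have := Nat.lt_div_mul_add (a := d * i + (P - 1)) hP
    omega
  have h0 : 0 < d * i := Nat.mul_pos hd (by omega)
  refine ⟨?_, ?_, h3⟩
  · by_contra hc
    have : (d * i + (P - 1)) / P = 0 := Nat.lt_one_iff.1 (not_le.1 hc)
    rw [this] at h3; omega
  · have : d * i ≤ d * P := Nat.mul_le_mul_left _ (by omega)
    have h4 : (d * i + (P - 1)) / P < d + 1 := by
      rw [Nat.div_lt_iff_lt_mul hP]
      have : (d + 1) * P = d * P + P := by ring
      omega
    omega

lemma choose_small (N m : ℕ) (x : ℝ) (hx : 0 ≤ x) (h : 9 * (N * x) ≤ m) :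
    ((N.choose m : ℕ) : ℝ) * x ^ m ≤ Real.exp (-m) := by
  have h1 : ((N.choose m : ℕ) : ℝ) ≤ (N:ℝ) ^ m / (m.factorial : ℝ) := Nat.choose_le_pow_div m N
  have h2 := Real.pow_div_factorial_le_exp (m:ℝ) (by positivity) m
  have hNx : 0 ≤ N * x := by positivity
  calc ((N.choose m : ℕ) : ℝ) * x ^ m ≤ (N:ℝ) ^ m / (m.factorial : ℝ) * x ^ m := by gcongr
    _ = (N * x) ^ m / (m.factorial : ℝ) := by rw [mul_pow]; ring
    _ ≤ ((m:ℝ) / 9) ^ m / (m.factorial : ℝ) := by gcongr; linarith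
    _ = (1 / 9) ^ m * ((m:ℝ) ^ m / (m.factorial : ℝ)) := by
        rw [div_pow, div_pow, one_pow]; ring
    _ ≤ (Real.exp (-2)) ^ m * Real.exp m := by
        gcongr
        rw [Real.exp_neg, one_div]
        gcongr
        have h3 : Real.exp 2 = Real.exp 1 * Real.exp 1 := by rw [← Real.exp_add]; norm_num
        have h4 := Real.exp_one_lt_three
        have h5 := Real.exp_pos 1
        rw [h3]; nlinarith
    _ = Real.exp (-m) := by
        rw [← Real.exp_nat_mul, ← Real.exp_add]; congr 1; ring

set_option maxHeartbeats 2000000 in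
theorem fixed_n (n P d q : ℕ) (hP : 1 ≤ P) (hd : 3 * P < d) (hq : q + d = (P + 2).choose 2 + 1)
    (τ C1 C2 K : ℝ) (hτ : τ = 1 / (22 * (d:ℝ) ^ 2))
    (hC1 : C1 = ((4 * (4 * (P + 2)) ^ 2 : ℕ) : ℝ) ^ ((4 * (P + 2)) ^ 2))
    (hC2 : C2 = ((4 * (P + 2) ^ 2 : ℕ) : ℝ) ^ ((P + 2) ^ 2))
    (hK : K = ((P:ℝ) + 2) * (18 * C2) * (8 * 4 ^ ((P + 2) ^ 2 + 1) / τ))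
    (hn1 : 1 ≤ n) (hL : 1 ≤ Real.log n)
    (E1 : (4 * ((P:ℝ) + 2) * C1) * (n:ℝ) ^ (-(1 / (2 * (d:ℝ)))) ≤ 1 / 2)
    (E2 : (2 * ((P:ℝ) + 2)) * (n:ℝ) ^ (2:ℝ) ≤ Real.exp (1 * (n:ℝ) ^ τ))
    (E3 : 32 * Real.log n ≤ (n:ℝ) ^ (τ / 2))
    (E4 : 2 * (n:ℝ) ^ (2:ℝ) ≤ Real.exp (1 / 2 * (n:ℝ) ^ (τ / 4)))
    (E5 : 4 * K * (n:ℝ) ^ (3:ℝ) ≤ Real.exp (τ / 8 * (n:ℝ) ^ (τ / 4))) :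
    (genRamsey n (P + 2) q : ℝ) ≤ 4 * K * (n:ℝ) ^ ((P:ℝ) / d) * Real.log n ^ (-(1:ℝ) / d) := by
  have hd0 : 0 < d := by omega
  have hd' : (0:ℝ) < d := by exact_mod_cast hd0
  have hd1 : (1:ℝ) ≤ d := by exact_mod_cast hd0
  have hP' : (1:ℝ) ≤ P := by exact_mod_cast hP
  have hτ0 : 0 < τ := by rw [hτ]; positivity
  have hτ1 : τ ≤ 1 := by
    rw [hτ, div_le_one (by positivity)]; nlinarith
  have hC2' : 1 ≤ C2 := by
    rw [hC2]
    apply one_le_pow₀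
    have : 1 ≤ 4 * (P + 2) ^ 2 := by nlinarith [Nat.zero_le P]
    exact_mod_cast this
  have hC1' : 0 ≤ C1 := by rw [hC1]; positivity
  set M : ℝ := 4 ^ ((P + 2) ^ 2 + 1) with hM
  have hM1 : 1 ≤ M := one_le_pow₀ (by norm_num)
  have hK1 : 1 ≤ K := by
    have h1 : 1 ≤ 8 * M / τ := by
      rw [le_div_iff₀ hτ0]; linarith
    have h2 : 1 ≤ ((P:ℝ) + 2) * (18 * C2) := by nlinarith
    rw [hK]
    exact one_le_mul_of_one_le_of_one_le h2 h1
  set x : ℝ := (n:ℝ) with hx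
  have hx1 : 1 ≤ x := by rw [hx]; exact_mod_cast hn1
  have hx0 : 0 < x := by linarith
  set L := Real.log x with hLdef
  have hL0 : 0 < L := by linarith
  set α : ℝ := (P:ℝ) / d - τ with hα
  have hα0 : 0 ≤ α := by
    rw [hα, hτ, sub_nonneg, div_le_div_iff₀ (by positivity) hd']
    nlinarith
  set A := ⌈x ^ α⌉₊ with hA
  have hxα : 1 ≤ x ^ α := Real.one_le_rpow hx1 hα0
  have hA1 : x ^ α ≤ A := Nat.le_ceil _
  have hA2 : (A:ℝ) ≤ 2 * x ^ α := ceil_le_two hxα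
  have hA0 : 0 < A := Nat.ceil_pos.2 (by linarith)
  set β : ℝ := K * x ^ τ * L ^ (-(1:ℝ) / d) with hβ
  set B := ⌈β⌉₊ with hB
  have hLd1 : L ^ (-(1:ℝ) / d) ≤ 1 := by
    apply Real.rpow_le_one_of_one_le_of_nonpos hL
    rw [neg_div]; simp
  have hLdm : L⁻¹ ≤ L ^ (-(1:ℝ) / d) := by
    rw [← Real.rpow_neg_one]
    apply Real.rpow_le_rpow_of_exponent_le hL
    rw [neg_div, neg_le_neg_iff, div_le_one hd']; exact hd1
  have hβ32 : 32 * x ^ (τ / 2) ≤ β := by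
    have h1 : x ^ τ = x ^ (τ / 2) * x ^ (τ / 2) := by
      rw [← Real.rpow_add hx0]; congr 1; ring
    have h2 : 0 < x ^ (τ / 2) := by positivity
    have h3 : 32 ≤ x ^ (τ / 2) * L⁻¹ := by
      rw [← div_eq_mul_inv, le_div_iff₀ hL0]; exact E3
    calc 32 * x ^ (τ / 2) ≤ (x ^ (τ / 2) * L⁻¹) * x ^ (τ / 2) := by gcongr
      _ = 1 * x ^ τ * L⁻¹ := by rw [h1]; ring
      _ ≤ β := by rw [hβ]; gcongr
  have hxτ2 : 1 ≤ x ^ (τ / 2) := Real.one_le_rpow hx1 (by positivity)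
  have hβ1 : 1 ≤ β := by linarith
  have hB1 : β ≤ B := Nat.le_ceil _
  have hB2 : (B:ℝ) ≤ 2 * β := ceil_le_two hβ1
  have hB0 : 0 < B := Nat.ceil_pos.2 (by linarith)
  have hB' : (0:ℝ) < B := by exact_mod_cast hB0
  set r : ℕ → ℕ := fun j => (d * (j - 2) + (P - 1)) / P with hr
  set m : ℕ → ℕ := fun j => ⌈9 * C2 * x ^ (τ * r j)⌉₊ with hm
  have hm1 : ∀ j, 9 * C2 * x ^ (τ * r j) ≤ m j := fun j => Nat.le_ceil _
  have hxr : ∀ j, 1 ≤ x ^ (τ * r j) := fun j => Real.one_le_rpow hx1 (by positivity)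
  have hm2 : ∀ j, (m j : ℝ) ≤ 18 * C2 * x ^ (τ * r j) := fun j => by
    have := ceil_le_two (x := 9 * C2 * x ^ (τ * r j)) (by nlinarith [hxr j])
    calc (m j : ℝ) ≤ _ := this
      _ = _ := by ring
  set ζ := x ^ (τ / 4) with hζ
  have hζ1 : 1 ≤ ζ := Real.one_le_rpow hx1 (by positivity)
  set σ := ⌈ζ⌉₊ with hσ
  have hσ1 : ζ ≤ σ := Nat.le_ceil _
  have hσ2 : (σ:ℝ) ≤ 2 * ζ := ceil_le_two hζ1
  have hcore := core n P d q A B hP hd hq hA0 hB0 m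
    (by
      rw [← hC1, ← hx]
      have key : ∀ j ∈ Icc 3 (4 * (P + 2)), x ^ (j - 2) *
          (C1 * (1 / (A:ℝ)) ^ (d * (j - 2) / P + 1)) ≤ C1 * x ^ (-(1 / (2 * (d:ℝ)))) := by
        intro j hj
        rw [mem_Icc] at hj
        have h1 := inv_pow_le hx1 hA1 (d * (j - 2) / P + 1)
        have h2 := h1_exp hP hd0 hj.1 hj.2
        rw [← hτ, ← hα] at h2
        calc x ^ (j - 2) * (C1 * (1 / (A:ℝ)) ^ (d * (j - 2) / P + 1))
            ≤ x ^ (j - 2) * (C1 * x ^ (-(α * (d * (j - 2) / P + 1 : ℕ)))) := by gcongr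
          _ = C1 * (x ^ (((j - 2 : ℕ) : ℝ)) * x ^ (-(α * (d * (j - 2) / P + 1 : ℕ)))) := by
              rw [Real.rpow_natCast]; ring
          _ = C1 * x ^ (((j - 2 : ℕ) : ℝ) + -(α * (d * (j - 2) / P + 1 : ℕ))) := by
              rw [← Real.rpow_add hx0]
          _ ≤ _ := by
              apply mul_le_mul_of_nonneg_left _ hC1'
              exact Real.rpow_le_rpow_of_exponent_le hx1 (by linarith)
      refine (sum_le_card_nsmul _ _ _ key).trans (le_trans ?_ E1)
      rw [nsmul_eq_mul, Nat.card_Icc]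
      have h5 : ((4 * (P + 2) + 1 - 3 : ℕ) : ℝ) ≤ 4 * ((P:ℝ) + 2) := by
        have : 4 * (P + 2) + 1 - 3 ≤ 4 * (P + 2) := by omega
        exact_mod_cast this
      calc _ ≤ 4 * ((P:ℝ) + 2) * (C1 * x ^ (-(1 / (2 * (d:ℝ))))) := by gcongr
        _ = _ := by ring)
    (by
      rw [← hC2, ← hx]
      have key : ∀ j ∈ Icc 3 (P + 2), (((n ^ (j - 2)).choose (m j) : ℕ) : ℝ) *
          (C2 * (1 / (A:ℝ)) ^ ((d * (j - 2) + (P - 1)) / P)) ^ (m j) ≤ Real.exp (-(x ^ τ)) := by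
        intro j hj
        rw [mem_Icc] at hj
        obtain ⟨f1, f2, f3⟩ := r_facts hP hd0 hj.1 hj.2
        have h1 := inv_pow_le hx1 hA1 (r j)
        have f3' : (d:ℝ) * ((j - 2 : ℕ) : ℝ) ≤ (r j : ℝ) * P := by exact_mod_cast f3
        have hexp : ((j - 2 : ℕ) : ℝ) + -(α * r j) ≤ τ * r j := by
          have h2 : ((j - 2 : ℕ) : ℝ) ≤ (P:ℝ) / d * r j := by
            rw [show (P:ℝ) / d * r j = (r j * P) / d by ring, le_div_iff₀ hd']; linarith
          rw [hα]; linarith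
        refine (choose_small _ _ _ (by positivity) ?_).trans ?_
        · refine le_trans ?_ (hm1 j)
          push_cast
          rw [← hx]
          calc 9 * (x ^ (j - 2) * (C2 * (1 / (A:ℝ)) ^ (r j)))
              ≤ 9 * (x ^ (j - 2) * (C2 * x ^ (-(α * r j)))) := by gcongr
            _ = 9 * C2 * (x ^ (((j - 2 : ℕ) : ℝ)) * x ^ (-(α * r j))) := by
                rw [Real.rpow_natCast]; ring
            _ = 9 * C2 * x ^ (((j - 2 : ℕ) : ℝ) + -(α * r j)) := by rw [← Real.rpow_add hx0]
            _ ≤ 9 * C2 * x ^ (τ * r j) := by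
                apply mul_le_mul_of_nonneg_left _ (by positivity)
                exact Real.rpow_le_rpow_of_exponent_le hx1 hexp
        · rw [Real.exp_le_exp, neg_le_neg_iff]
          refine le_trans ?_ (hm1 j)
          have f1' : (1:ℝ) ≤ r j := by exact_mod_cast f1
          have h6 : x ^ τ ≤ x ^ (τ * r j) :=
            Real.rpow_le_rpow_of_exponent_le hx1 (le_mul_of_one_le_right hτ0.le f1')
          refine h6.trans (le_mul_of_one_le_left (by positivity) ?_)
          linarith
      have hs := sum_le_card_nsmul _ _ _ key
      rw [nsmul_eq_mul, Nat.card_Icc] at hs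
      have h5 : ((P + 2 + 1 - 3 : ℕ) : ℝ) ≤ (P:ℝ) + 2 := by
        have : P + 2 + 1 - 3 ≤ P + 2 := by omega
        exact_mod_cast this
      rw [one_mul, Real.rpow_two] at E2
      have h7 := Real.exp_pos (-(x ^ τ))
      have h8 : Real.exp (x ^ τ) * Real.exp (-(x ^ τ)) = 1 := by
        rw [← Real.exp_add]; simp
      calc _ ≤ x ^ 2 * (((P:ℝ) + 2) * Real.exp (-(x ^ τ))) := by
            apply mul_le_mul_of_nonneg_left _ (by positivity)
            exact hs.trans (by gcongr)
        _ = 1 / 2 * ((2 * ((P:ℝ) + 2)) * x ^ 2 * Real.exp (-(x ^ τ))) := by ring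
        _ ≤ 1 / 2 * (Real.exp (x ^ τ) * Real.exp (-(x ^ τ))) := by gcongr
        _ < 1 := by rw [h8]; norm_num)
    σ (τ / (8 * M) * L) ζ hζ1
    (by
      have key : ∀ j ∈ Icc 3 (P + 2), (m j : ℝ) * (1 / (B:ℝ)) ^ ((d * (j - 2) + (P - 1)) / P) ≤
          18 * C2 * (L / K) := by
        intro j hj
        rw [mem_Icc] at hj
        obtain ⟨f1, f2, f3⟩ := r_facts hP hd0 hj.1 hj.2
        change (m j : ℝ) * (1 / (B:ℝ)) ^ (r j) ≤ _
        have f1' : 1 ≤ r j := f1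
        have f2' : (r j : ℝ) ≤ d := by exact_mod_cast f2
        have hβ0 : 0 < β := by linarith
        have hβr : K * x ^ (τ * r j) * L⁻¹ ≤ β ^ (r j) := by
          rw [hβ, mul_pow, mul_pow, ← Real.rpow_natCast (x ^ τ), ← Real.rpow_mul hx0.le,
            ← Real.rpow_natCast (L ^ _), ← Real.rpow_mul hL0.le]
          have k1 : K ≤ K ^ (r j) := le_self_pow₀ hK1 (by omega)
          have k2 : L⁻¹ ≤ L ^ (-(1:ℝ) / d * r j) := by
            rw [← Real.rpow_neg_one]
            apply Real.rpow_le_rpow_of_exponent_le hL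
            rw [neg_div, neg_mul, neg_le_neg_iff, one_div_mul_eq_div, div_le_one hd']
            exact f2'
          gcongr
        have hpos : 0 < K * x ^ (τ * r j) * L⁻¹ := by positivity
        have hBr : (1 / (B:ℝ)) ^ (r j) ≤ (K * x ^ (τ * r j) * L⁻¹)⁻¹ := by
          rw [one_div, inv_pow]
          gcongr
          exact hβr.trans (by gcongr)
        calc (m j : ℝ) * (1 / (B:ℝ)) ^ (r j)
            ≤ (18 * C2 * x ^ (τ * r j)) * (K * x ^ (τ * r j) * L⁻¹)⁻¹ := by
              gcongr
              exact hm2 j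
          _ = 18 * C2 * (L / K) := by
              have := hxr j
              field_simp
      refine (sum_le_card_nsmul _ _ _ key).trans ?_
      rw [nsmul_eq_mul, Nat.card_Icc]
      have h5 : ((P + 2 + 1 - 3 : ℕ) : ℝ) ≤ (P:ℝ) + 2 := by
        have : P + 2 + 1 - 3 ≤ P + 2 := by omega
        exact_mod_cast this
      calc _ ≤ ((P:ℝ) + 2) * (18 * C2 * (L / K)) := by gcongr
        _ = _ := by
          rw [hK]
          field_simp)
    (by
      have h1 : ζ * ζ = x ^ (τ / 2) := by
        rw [hζ, ← Real.rpow_add hx0]; congr 1; ring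
      calc 16 * (σ:ℝ) * ζ ≤ 16 * (2 * ζ) * ζ := by gcongr
        _ = 32 * x ^ (τ / 2) := by rw [← h1]; ring
        _ ≤ β := hβ32
        _ ≤ B := hB1)
    (by
      rw [Real.rpow_two] at E4
      refine E4.trans ?_
      rw [Real.exp_le_exp]; linarith)
    (by
      rw [← hx]
      have hBn : (B:ℝ) ≤ 2 * K * x := by
        have : x ^ τ ≤ x := by
          calc x ^ τ ≤ x ^ (1:ℝ) := Real.rpow_le_rpow_of_exponent_le hx1 hτ1
            _ = x := Real.rpow_one x
        calc (B:ℝ) ≤ 2 * (K * x ^ τ * L ^ (-(1:ℝ) / d)) := hB2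
          _ ≤ 2 * (K * x * 1) := by gcongr
          _ = _ := by ring
      have hζσ : ζ ^ σ = Real.exp (σ * (τ / 8) * L) * Real.exp (σ * (τ / 8) * L) := by
        rw [← Real.exp_add, hζ, ← Real.rpow_natCast, ← Real.rpow_mul hx0.le,
          Real.rpow_def_of_pos hx0]
        congr 1
        rw [← hLdef]; ring
      have hE : (4:ℝ) ^ ((P + 2) ^ 2 + 1) * σ * (τ / (8 * M) * L) = σ * (τ / 8) * L := by
        rw [← hM]; field_simp
      rw [hζσ, hE]
      apply mul_le_mul_of_nonneg_right _ (Real.exp_pos _).le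
      calc 2 * x ^ 2 * (B:ℝ) ≤ 2 * x ^ 2 * (2 * K * x) := by gcongr
        _ = 4 * K * x ^ (3:ℝ) := by
          rw [show (3:ℝ) = ((3:ℕ):ℝ) by norm_num, Real.rpow_natCast]; ring
        _ ≤ _ := E5
        _ ≤ _ := by
          rw [Real.exp_le_exp]
          calc τ / 8 * ζ ≤ τ / 8 * σ := by gcongr
            _ = σ * (τ / 8) * 1 := by ring
            _ ≤ _ := by gcongr)
  have hfin : (genRamsey n (P + 2) q : ℝ) ≤ (A:ℝ) * B := by exact_mod_cast hcore
  calc (genRamsey n (P + 2) q : ℝ) ≤ (A:ℝ) * B := hfin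
    _ ≤ (2 * x ^ α) * (2 * β) := by gcongr
    _ = 4 * K * (x ^ α * x ^ τ) * L ^ (-(1:ℝ) / d) := by rw [hβ]; ring
    _ = _ := by
      rw [← Real.rpow_add hx0]
      congr 3
      rw [hα]; ring

theorem genRamsey_upper_bound (p q : ℕ) (hp : 3 ≤ p) (hq1 : 1 ≤ q)
    (hq2 : (4 * q : ℤ) ≤ (p : ℤ) ^ 2 - 26 * p + 55) :
    ∃ K : ℝ, 0 < K ∧ ∃ n₀ : ℕ, 2 ≤ n₀ ∧ ∀ n : ℕ, n₀ ≤ n →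
      (genRamsey n p q : ℝ) ≤
        K * (n : ℝ) ^ (((p : ℝ) - 2) / ((p.choose 2 : ℝ) - (q : ℝ) + 1)) *
          Real.log n ^ (-(1 : ℝ) / ((p.choose 2 : ℝ) - (q : ℝ) + 1)) := by
  obtain ⟨P, rfl⟩ : ∃ P, p = P + 2 := ⟨p - 2, by omega⟩
  have hP : 1 ≤ P := by omega
  have hch : 2 * ((P + 2).choose 2 : ℤ) = (P + 2) * (P + 1) := by
    have h := Nat.triangle_succ (P + 1)
    have h2 : (P + 2).choose 2 * 2 = (P + 2) * (P + 1) := by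
      rw [Nat.choose_two_right]
      exact Nat.div_mul_cancel (even_iff_two_dvd.1 (by
        rw [mul_comm]; exact Nat.even_mul_succ_self (P + 1)))
    have h3 : ((P + 2).choose 2 * 2 : ℤ) = (P + 2) * (P + 1) := by exact_mod_cast h2
    linarith
  push_cast at hq2
  have hdz : (q:ℤ) + 3 * P < ((P + 2).choose 2 : ℤ) + 1 := by nlinarith
  have hdn : q + 3 * P < (P + 2).choose 2 + 1 := by exact_mod_cast hdz
  obtain ⟨d, hd⟩ : ∃ d, q + d = (P + 2).choose 2 + 1 := ⟨(P + 2).choose 2 + 1 - q, by omega⟩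
  have hd3 : 3 * P < d := by omega
  have hdR : (((P + 2).choose 2 : ℕ) : ℝ) - (q:ℝ) + 1 = d := by
    have : (q:ℝ) + d = (((P + 2).choose 2 : ℕ) : ℝ) + 1 := by exact_mod_cast hd
    linarith
  rw [hdR]
  have hPR : (((P + 2 : ℕ) : ℝ) - 2) = P := by push_cast; ring
  rw [hPR]
  have hd0 : (0:ℝ) < d := by
    have : 0 < d := by omega
    exact_mod_cast this
  set τ : ℝ := 1 / (22 * (d:ℝ) ^ 2) with hτ
  have hτ0 : 0 < τ := by positivity
  set C1 : ℝ := ((4 * (4 * (P + 2)) ^ 2 : ℕ) : ℝ) ^ ((4 * (P + 2)) ^ 2) with hC1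
  set C2 : ℝ := ((4 * (P + 2) ^ 2 : ℕ) : ℝ) ^ ((P + 2) ^ 2) with hC2
  have hC2' : 0 < C2 := by positivity
  set K : ℝ := ((P:ℝ) + 2) * (18 * C2) * (8 * 4 ^ ((P + 2) ^ 2 + 1) / τ) with hK
  have hK0 : 0 < K := by positivity
  refine ⟨4 * K, by positivity, ?_⟩
  have hev : ∀ᶠ n : ℕ in Filter.atTop, (genRamsey n (P + 2) q : ℝ) ≤
      4 * K * (n:ℝ) ^ ((P:ℝ) / d) * Real.log n ^ (-(1:ℝ) / d) := by
    filter_upwards [Filter.eventually_ge_atTop 1,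
      (Real.tendsto_log_atTop.comp tendsto_natCast_atTop_atTop).eventually_ge_atTop 1,
      ev_neg (4 * ((P:ℝ) + 2) * C1) (1 / (2 * (d:ℝ))) (1 / 2) (by norm_num) (by positivity),
      ev_exp (2 * ((P:ℝ) + 2)) 2 τ 1 (by positivity) hτ0 one_pos,
      ev_log (τ / 2) (by positivity),
      ev_exp 2 2 (τ / 4) (1 / 2) (by norm_num) (by positivity) (by norm_num),
      ev_exp (4 * K) 3 (τ / 4) (τ / 8) (by positivity) (by positivity) (by positivity)]
      with n hn1 hL E1 E2 E3 E4 E5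
    exact fixed_n n P d q hP hd3 hd τ C1 C2 K hτ hC1 hC2 hK hn1 hL E1 E2 E3 E4 E5
  obtain ⟨n₀, hn₀⟩ := Filter.eventually_atTop.1 hev
  exact ⟨max n₀ 2, le_max_right _ _, fun n hn => hn₀ n ((le_max_left _ _).trans hn)⟩

end EG
end

section
/- For all fixed integers k ≥ 3 and s with (k² + 24k − 47)/4 ≤ s ≤ C(k,2) + 1, there exist a constant c > 0 and an integer n₀ ≥ 2 such that for all n ≥ n₀ one has F⁽²⁾(n; k, s) ≥ c · n^{(2s−k)/(s−1)} · (log n)^{1/(s−1)}. -/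
namespace EG

/-- Complete bipartite graph: every edge count up to `⌊n/2⌋⌈n/2⌉` is achieved with at most `k²/4`
edges on each `k`-set, so `F2` exceeds it. -/
lemma F2_gt (n k s : ℕ) (h : k ^ 2 < 4 * s) : (n / 2) * (n - n / 2) < F2 n k s := by
  classical
  let A : Finset (Fin n) := Finset.univ.filter fun i => i.val < n / 2
  let B : Finset (Fin n) := Finset.univ.filter fun i => ¬ i.val < n / 2
  let f : Fin n × Fin n → Sym2 (Fin n) := fun p => s(p.1, p.2)
  have hA : A.card = n / 2 := by
    have h1 : A.card = Fintype.card {i : Fin n // i.val < n / 2} := by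
      rw [Fintype.card_subtype]
    have h2 : A.map Fin.valEmbedding = Finset.range (n / 2) := by
      ext x
      simp only [A, Finset.mem_map, Finset.mem_filter, Finset.mem_univ, true_and,
        Fin.valEmbedding_apply, Finset.mem_range]
      constructor
      · rintro ⟨a, ha, rfl⟩
        exact ha
      · intro hx
        exact ⟨⟨x, by omega⟩, hx, rfl⟩
    rw [← Finset.card_map Fin.valEmbedding, h2, Finset.card_range]
  have hAB : A.card + B.card = n := by
    have := Finset.card_filter_add_card_filter_not (s := (Finset.univ : Finset (Fin n)))
      (fun i : Fin n => i.val < n / 2)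
    simpa [A, B] using this
  have hcard : ((A ×ˢ B).image f).card = (n / 2) * (n - n / 2) := by
    rw [Finset.card_image_of_injOn, Finset.card_product, hA]
    · congr 1
      omega
    · rintro ⟨a, b⟩ h1 ⟨a', b'⟩ h2 h3
      simp only [A, B, Finset.coe_product, Set.mem_prod, Finset.mem_coe, Finset.mem_filter,
        Finset.mem_univ, true_and] at h1 h2
      simp only [f, Sym2.eq_iff] at h3
      rcases h3 with ⟨h3, h4⟩ | ⟨h3, h4⟩
      · rw [h3, h4]
      · subst h3
        exact absurd h1.1 h2.2
  have hne : { m | ∀ E : Finset (Sym2 (Fin n)), (∀ e ∈ E, ¬ e.IsDiag) → E.card = m →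
      ∃ S : Finset (Fin n), S.card = k ∧ s ≤ (E ∩ S.sym2).card }.Nonempty := by
    refine ⟨Fintype.card (Sym2 (Fin n)) + 1, fun E _ hE => ?_⟩
    have := Finset.card_le_univ E
    omega
  by_contra hlt
  have hmem := Nat.sInf_mem hne
  change F2 n k s ∈ _ at hmem
  rw [Set.mem_setOf_eq] at hmem
  obtain ⟨E, hE, hEc⟩ := Finset.exists_subset_card_eq
    (s := (A ×ˢ B).image f) (n := F2 n k s) (by rw [hcard]; omega)
  obtain ⟨S, hS, hsS⟩ := hmem E (by
    intro e he hd
    obtain ⟨⟨a, b⟩, hab, rfl⟩ := Finset.mem_image.1 (hE he)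
    simp only [A, B, Finset.mem_product, Finset.mem_filter, Finset.mem_univ, true_and] at hab
    simp only [f, Sym2.mk_isDiag_iff] at hd
    subst hd
    exact hab.2 hab.1) hEc
  have hsub : E ∩ S.sym2 ⊆ (((S.filter fun i => i.val < n / 2) ×ˢ
      (S.filter fun i => ¬ i.val < n / 2)).image f) := by
    intro e he
    rw [Finset.mem_inter] at he
    obtain ⟨⟨a, b⟩, hab, rfl⟩ := Finset.mem_image.1 (hE he.1)
    have h2 := he.2
    simp only [f, Finset.mk_mem_sym2_iff] at h2
    simp only [A, B, Finset.mem_product, Finset.mem_filter, Finset.mem_univ, true_and] at hab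
    refine Finset.mem_image.2 ⟨(a, b), ?_, rfl⟩
    simp only [Finset.mem_product, Finset.mem_filter]
    exact ⟨⟨h2.1, hab.1⟩, h2.2, hab.2⟩
  have h1 := (Finset.card_le_card hsub).trans Finset.card_image_le
  rw [Finset.card_product] at h1
  have h2 := Finset.card_filter_add_card_filter_not (s := S) (fun i : Fin n => i.val < n / 2)
  rw [hS] at h2
  generalize (S.filter fun i => i.val < n / 2).card = a at h1 h2
  generalize (S.filter fun i => ¬ i.val < n / 2).card = b at h1 h2
  subst h2
  zify at *
  nlinarith [sq_nonneg ((a : ℤ) - b)]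

/-- Corollary: for fixed `k ≥ 3` and `(k² + 24k − 47)/4 ≤ s ≤ C(k,2) + 1`,
`F²(n;k,s) = Ω( n^{(2s−k)/(s−1)} · (log n)^{1/(s−1)} )`. -/
theorem F2_lower_bound (k s : ℕ) (hk : 3 ≤ k)
    (hs1 : ((k : ℤ) ^ 2 + 24 * k - 47) ≤ 4 * s) (hs2 : s ≤ k.choose 2 + 1) :
    ∃ c : ℝ, 0 < c ∧ ∃ n₀ : ℕ, 2 ≤ n₀ ∧ ∀ n : ℕ, n₀ ≤ n →
      c * (n : ℝ) ^ ((2 * (s : ℝ) - (k : ℝ)) / ((s : ℝ) - 1)) *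
          Real.log n ^ ((1 : ℝ) / ((s : ℝ) - 1)) ≤ (F2 n k s : ℝ) := by
  have hk' : (3 : ℤ) ≤ k := by exact_mod_cast hk
  have hs : k ^ 2 < 4 * s := by
    zify
    linarith
  have hs9 : 2 ≤ s := by
    have : (2 : ℤ) ≤ s := by nlinarith
    exact_mod_cast this
  refine ⟨1 / 4, by norm_num, 2, le_refl _, fun n hn => ?_⟩
  have hF := F2_gt n k s hs
  have hF4 : n ^ 2 ≤ 4 * F2 n k s := by
    obtain ⟨m, hm | hm⟩ : ∃ m, n = 2 * m ∨ n = 2 * m + 1 := ⟨n / 2, by omega⟩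
    · have e1 : n / 2 = m := by omega
      have e2 : n - n / 2 = m := by omega
      rw [e2, e1] at hF
      rw [hm] at hF ⊢
      nlinarith
    · have e1 : n / 2 = m := by omega
      have e2 : n - n / 2 = m + 1 := by omega
      rw [e2, e1] at hF
      rw [hm] at hF ⊢
      nlinarith
  have hF4' : (n : ℝ) ^ 2 ≤ 4 * (F2 n k s : ℝ) := by exact_mod_cast hF4
  have hn1 : (1 : ℝ) ≤ n := by exact_mod_cast (by omega : 1 ≤ n)
  have hn0 : (0 : ℝ) < n := by linarith
  have hsr : (0 : ℝ) < (s : ℝ) - 1 := by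
    have : (2 : ℝ) ≤ s := by exact_mod_cast hs9
    linarith
  have hkr : (3 : ℝ) ≤ k := by exact_mod_cast hk
  have hlog : Real.log n ^ ((1 : ℝ) / ((s : ℝ) - 1)) ≤ (n : ℝ) ^ ((1 : ℝ) / ((s : ℝ) - 1)) :=
    Real.rpow_le_rpow (Real.log_nonneg hn1) (Real.log_le_self hn0.le) (by positivity)
  have hmain : (n : ℝ) ^ ((2 * (s : ℝ) - (k : ℝ)) / ((s : ℝ) - 1)) *
      Real.log n ^ ((1 : ℝ) / ((s : ℝ) - 1)) ≤ (n : ℝ) ^ 2 := by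
    calc _ ≤ (n : ℝ) ^ ((2 * (s : ℝ) - (k : ℝ)) / ((s : ℝ) - 1)) *
          (n : ℝ) ^ ((1 : ℝ) / ((s : ℝ) - 1)) :=
          mul_le_mul_of_nonneg_left hlog (by positivity)
      _ = (n : ℝ) ^ ((2 * (s : ℝ) - (k : ℝ)) / ((s : ℝ) - 1) + (1 : ℝ) / ((s : ℝ) - 1)) :=
          (Real.rpow_add hn0 _ _).symm
      _ ≤ (n : ℝ) ^ (2 : ℝ) := by
          apply Real.rpow_le_rpow_of_exponent_le hn1
          rw [← add_div, div_le_iff₀ hsr]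
          linarith
      _ = (n : ℝ) ^ 2 := Real.rpow_two _
  rw [mul_assoc]
  linarith

end EG
end
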